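/- arXiv:1009.4736 — 2 statements merged into one kernel-verified Lean document; each statement's English description precedes it below -/
import Mathlib

section
/- Let n be a positive multiple of 3 and let P be a set of n points in general position in the plane (no three collinear) such that E_{≤k}(P) = 3·binom(k+2,2) for every integer k with 0 ≤ k < n/3. Then P is 3-decomposable. -/
/-- The determinant of two planar vectors; its sign tells on which open side of the
(directed) line with direction `u` a point lies. -/
def det2 (u v : ℝ × ℝ) : ℝ := u.1 * v.2 - u.2 * v.1

/-- The standard inner product on the plane; orthogonal projection onto a line with
direction `d` orders points by `dot2 d ·`. -/
def dot2 (u v : ℝ × ℝ) : ℝ := u.1 * v.1 + u.2 * v.2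

/-- `P` is in general position: no three of its points are collinear. -/
def GenPos (P : Finset (ℝ × ℝ)) : Prop :=
  ∀ p ∈ P, ∀ q ∈ P, ∀ r ∈ P, p ≠ q → p ≠ r → q ≠ r →
    ¬ Collinear ℝ ({p, q, r} : Set (ℝ × ℝ))

/-- The line through the two (distinct) points `p, q` of `P` is a `k`-edge of `P`: it
leaves exactly `k` points of `P` on one of its open sides. -/
def IsKEdge (P : Finset (ℝ × ℝ)) (k : ℕ) (p q : ℝ × ℝ) : Prop :=
  p ≠ q ∧
    ({x ∈ (P : Set (ℝ × ℝ)) | 0 < det2 (q - p) (x - p)}.ncard = k ∨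
     {x ∈ (P : Set (ℝ × ℝ)) | det2 (q - p) (x - p) < 0}.ncard = k)

/-- `E_k(P)`: the number of `k`-edges of `P` (pairs of points of `P` whose line leaves
exactly `k` points of `P` on one open side). -/
noncomputable def Ek (P : Finset (ℝ × ℝ)) (k : ℕ) : ℕ :=
  {e : Sym2 (ℝ × ℝ) | ∃ p ∈ P, ∃ q ∈ P, e = s(p, q) ∧ IsKEdge P k p q}.ncard

/-- `E_{≤k}(P) = Σ_{j=0}^{k} E_j(P)`: the number of `(≤ k)`-edges of `P`. -/
noncomputable def EleK (P : Finset (ℝ × ℝ)) (k : ℕ) : ℕ :=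
  ∑ j ∈ Finset.range (k + 1), Ek P j

/-- Along the projection direction `d`, all points of `X` lie strictly between all the
points of `Y` and all the points of `Z` (the `Y`-block on one side, the `Z`-block on
the other). -/
def ProjBetween (d : ℝ × ℝ) (X Y Z : Finset (ℝ × ℝ)) : Prop :=
  (∀ x ∈ X, ∀ y ∈ Y, ∀ z ∈ Z, dot2 d y < dot2 d x ∧ dot2 d x < dot2 d z) ∨
  (∀ x ∈ X, ∀ y ∈ Y, ∀ z ∈ Z, dot2 d z < dot2 d x ∧ dot2 d x < dot2 d y)

/-- `P` is 3-decomposable: it can be partitioned into three equal-sized sets `A, B, C`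
such that some triangle `T = v₁v₂v₃` encloses `P` and the orthogonal projections of `P`
onto the lines of the three sides of `T` show `A` between `B` and `C` on one side, `B`
between `C` and `A` on the second side, and `C` between `A` and `B` on the third side. -/
def PtSet3Decomposable (P : Finset (ℝ × ℝ)) : Prop :=
  ∃ A B C : Finset (ℝ × ℝ), ∃ v₁ v₂ v₃ : ℝ × ℝ,
    A ∪ B ∪ C = P ∧ Disjoint A B ∧ Disjoint A C ∧ Disjoint B C ∧
    A.card = B.card ∧ B.card = C.card ∧
    ¬ Collinear ℝ ({v₁, v₂, v₃} : Set (ℝ × ℝ)) ∧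
    (P : Set (ℝ × ℝ)) ⊆ convexHull ℝ {v₁, v₂, v₃} ∧
    ProjBetween (v₂ - v₁) A B C ∧ ProjBetween (v₃ - v₂) B C A ∧
    ProjBetween (v₁ - v₃) C A B

/-!
Direct every `k`-edge so that its `k` points lie on its left. For a vertex `v` of the convex hull,
`2 * (k + 1)` of the directed `(≤ k)`-edges of `P` pass through `v`. The others are the
`(≤ k - 1)`-edges of `P \ {v}` together with the `k`-edges of `P` that have `v` strictly on their
right; call these cut by `v`. Turning lines about the last `k + 1` points in the clockwise order
around `v` shows that at least `k + 1` edges are cut by `v`, and induction gives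
`E_{≤k}(P) ≥ 3 * (k + 2).choose 2`.

In the case of equality every hull vertex cuts exactly `k + 1` of the `k`-edges. Since `E₀(P) = 3`,
the hull is a triangle `abc`, say clockwise. Every `k`-edge is cut by `a`, `b` or `c`, and as there
are `3 * (k + 1)` of them, none is cut twice. A point that is among the last `k + 1` around `a` but
not among the first `k + 1` around `b` would lie on a `k`-edge cut by both; hence these two sets
agree, and for `#P = 3 * (k + 1)` the three sets obtained in this way partition `P`. At each hull
vertex two of them are the first and the last `k + 1` points of its clockwise order. As only `k + 1`
edges are cut there, a slight tilt of the `k`-edge through that vertex is a line whose parallels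
separate the three sets. Suitable multiples of the three normals of these lines are the sides of an
enclosing triangle.
-/

open Finset

section Rank

variable {ι α : Type*} [LinearOrder α] {s : Finset ι} {f : ι → α} {k : ℕ}

/-- The rank of `x` for the values of `f` on `s`, counted from `0`. -/
def rankIn (s : Finset ι) (f : ι → α) (x : ι) : ℕ := #{z ∈ s | f z < f x}

lemma rankIn_lt_rankIn_iff {x y : ι} (hx : x ∈ s) :
    rankIn s f x < rankIn s f y ↔ f x < f y := by
  refine ⟨fun h => ?_, fun h => card_lt_card ⟨?_, fun hsub => ?_⟩⟩
  · contrapose! h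
    exact card_le_card (monotone_filter_right s fun z _ hz => hz.trans_le h)
  · exact monotone_filter_right s fun z _ hz => hz.trans h
  · exact lt_irrefl _ (mem_filter.1 (hsub (mem_filter.2 ⟨hx, h⟩))).2

lemma injOn_rankIn (hf : Set.InjOn f s) : Set.InjOn (rankIn s f) s := by
  intro x hx y hy hxy
  refine hf hx hy (le_antisymm ?_ ?_) <;> rw [← not_lt]
  · exact fun h => hxy.not_gt ((rankIn_lt_rankIn_iff hy).2 h)
  · exact fun h => hxy.not_lt ((rankIn_lt_rankIn_iff hx).2 h)

lemma image_rankIn (hf : Set.InjOn f s) : s.image (rankIn s f) = range #s := by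
  refine eq_of_subset_of_card_le (fun r hr => ?_) ?_
  · obtain ⟨x, hx, rfl⟩ := mem_image.1 hr
    exact mem_range.2 (card_lt_card (filter_ssubset.2 ⟨x, hx, lt_irrefl _⟩))
  · rw [card_range, card_image_of_injOn (injOn_rankIn hf)]

lemma exists_rankIn_eq (hf : Set.InjOn f s) (hk : k < #s) : ∃ x ∈ s, rankIn s f x = k := by
  rwa [← mem_range, ← image_rankIn hf, mem_image] at hk

lemma card_filter_rankIn_le (hf : Set.InjOn f s) (hk : k < #s) :
    #{x ∈ s | rankIn s f x ≤ k} = k + 1 := by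
  have hinj : Set.InjOn (rankIn s f) ({x ∈ s | rankIn s f x ≤ k} : Finset ι) :=
    (injOn_rankIn hf).mono (coe_subset.2 (filter_subset _ _))
  have himage : ({x ∈ s | rankIn s f x ≤ k} : Finset ι).image (rankIn s f) = range (k + 1) := by
    rw [← filter_image (p := (· ≤ k)), image_rankIn hf]
    ext r
    simp only [mem_filter, mem_range]
    omega
  rw [← card_image_of_injOn hinj, himage, card_range]

end Rank

section Sweep

variable {ι : Type*} {s : Finset ι}

lemma exists_pos_forall_add_mul_pos {f g : ι → ℝ}
    (h : ∀ i ∈ s, 0 < f i ∨ f i = 0 ∧ 0 < g i) :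
    ∃ ε : ℝ, 0 < ε ∧ ∀ i ∈ s, 0 < f i + ε * g i := by
  have hev : ∀ᶠ ε in nhdsWithin (0 : ℝ) (Set.Ioi 0), ∀ i ∈ s, 0 < f i + ε * g i := by
    rw [Filter.eventually_all_finset]
    intro i hi
    rcases h i hi with hpos | ⟨hzero, hpos⟩
    · have hcont : ContinuousAt (fun ε : ℝ => f i + ε * g i) 0 := by fun_prop
      exact (hcont.eventually (lt_mem_nhds (by simpa using hpos))).filter_mono
        nhdsWithin_le_nhds
    · filter_upwards [self_mem_nhdsWithin] with ε (hε : 0 < ε)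
      rw [hzero, zero_add]
      exact mul_pos hε hpos
  exact ((eventually_mem_nhdsWithin (a := (0 : ℝ)) (s := Set.Ioi 0)).and hev).exists

variable {α β : ι → ℝ} {k : ℕ}

lemma mul_lt_of_mul_lt_of_le {c c' : ℝ} {z : ι} (hcc : c' ≤ c) (hz : c' * β z < α z)
    (h : 0 < β z → α z / β z ≤ c → α z / β z ≤ c') : c * β z < α z := by
  rcases le_or_gt (β z) 0 with hβ | hβ
  · exact (mul_le_mul_of_nonpos_right hcc hβ).trans_lt hz
  · rw [← lt_div_iff₀ hβ] at hz ⊢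
    exact lt_of_not_ge fun hle => (h hβ hle).not_gt hz

lemma exists_first_slope (hα : #{z ∈ s | 0 < α z} ≤ k) (hβ : k < #{z ∈ s | 0 < β z}) :
    ∃ y ∈ s, 0 < β y ∧ α y / β y ≤ 0 ∧ #{z ∈ s | α y / β y * β z < α z} ≤ k := by
  have hne : ({z ∈ s | 0 < β z ∧ α z / β z ≤ 0} : Finset ι).Nonempty := by
    obtain ⟨z, hzβ, hzα⟩ := exists_mem_notMem_of_card_lt_card (hα.trans_lt hβ)
    simp only [mem_filter] at hzβ hzα
    exact ⟨z, by simpa [hzβ] using div_nonpos_of_nonpos_of_nonneg (by simp_all) hzβ.2.le⟩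
  obtain ⟨y, hy, hmax⟩ := exists_max_image _ (fun z => α z / β z) hne
  simp only [mem_filter] at hy hmax
  refine ⟨y, hy.1, hy.2.1, hy.2.2, (card_le_card fun z hz => ?_).trans hα⟩
  rw [mem_filter] at hz ⊢
  refine ⟨hz.1, ?_⟩
  simpa using mul_lt_of_mul_lt_of_le hy.2.2 hz.2 fun hβz hle => hmax z ⟨hz.1, hβz, hle⟩

lemma exists_next_slope (hβ : k < #{z ∈ s | 0 < β z})
    (hinj : Set.InjOn (fun z => α z / β z) {z ∈ s | 0 < β z}) {y : ι} (hys : y ∈ s)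
    (hyβ : 0 < β y) (hcard : #{z ∈ s | α y / β y * β z < α z} < k) :
    ∃ x ∈ s, 0 < β x ∧ α x / β x < α y / β y ∧ #{z ∈ s | α x / β x * β z < α z} ≤ k := by
  classical
  have hle : #(insert y {z ∈ s | α y / β y * β z < α z}) ≤ k := (card_insert_le _ _).trans hcard
  have heq : ∀ z ∈ s, 0 < β z → α z / β z = α y / β y → z = y :=
    fun z hz hzβ h => hinj ⟨hz, hzβ⟩ ⟨hys, hyβ⟩ h
  have hne : ({z ∈ s | 0 < β z ∧ α z / β z < α y / β y} : Finset ι).Nonempty := by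
    obtain ⟨z, hzβ, hz⟩ := exists_mem_notMem_of_card_lt_card (hle.trans_lt hβ)
    simp only [mem_filter, mem_insert, not_or, not_and, not_lt] at hzβ hz
    have hle := (div_le_iff₀ hzβ.2).2 (hz.2 hzβ.1)
    exact ⟨z, by simpa [hzβ] using hle.lt_of_ne fun h => hz.1 (heq z hzβ.1 hzβ.2 h)⟩
  obtain ⟨x, hx, hmax⟩ := exists_max_image _ (fun z => α z / β z) hne
  simp only [mem_filter] at hx hmax
  refine ⟨x, hx.1, hx.2.1, hx.2.2, (card_le_card fun z hz => ?_).trans hle⟩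
  rw [mem_filter] at hz
  rw [mem_insert, mem_filter, or_iff_not_imp_left]
  exact fun hzy => ⟨hz.1, mul_lt_of_mul_lt_of_le hx.2.2.le hz.2 fun hβz hle =>
    hmax z ⟨hz.1, hβz, hle.lt_of_ne (mt (heq z hz.1 hβz) hzy)⟩⟩

/-- A discrete intermediate value theorem for a turning line: regard `(α z, β z)` as the position
of `z`; as the half-plane `0 < α` is turned into `0 < β`, the points enter it one at a time. -/
lemma exists_card_slope_eq (hα : #{z ∈ s | 0 < α z} ≤ k) (hβ : k < #{z ∈ s | 0 < β z})
    (hinj : Set.InjOn (fun z => α z / β z) {z ∈ s | 0 < β z}) :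
    ∃ y ∈ s, 0 < β y ∧ α y ≤ 0 ∧ #{z ∈ s | 0 < α z * β y - α y * β z} = k := by
  obtain ⟨y₀, hy₀s, hy₀⟩ := exists_first_slope hα hβ
  obtain ⟨y, hy, hmin⟩ := exists_min_image
    {y ∈ s | 0 < β y ∧ α y / β y ≤ 0 ∧ #{z ∈ s | α y / β y * β z < α z} ≤ k}
    (fun z => α z / β z) ⟨y₀, mem_filter.2 ⟨hy₀s, hy₀⟩⟩
  simp only [mem_filter] at hy hmin
  obtain ⟨hys, hyβ, hyα, hcard⟩ := hy
  refine ⟨y, hys, hyβ, by simpa using (div_le_iff₀ hyβ).1 hyα, ?_⟩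
  have hcross : ∀ z, 0 < α z * β y - α y * β z ↔ α y / β y * β z < α z := fun z => by
    rw [sub_pos, div_mul_eq_mul_div, div_lt_iff₀ hyβ]
  simp only [hcross]
  refine hcard.antisymm (not_lt.1 fun hlt => ?_)
  obtain ⟨x, hxs, hxβ, hxy, hx⟩ := exists_next_slope hβ hinj hys hyβ hlt
  exact (hmin x ⟨hxs, hxβ, (hxy.trans_le hyα).le, hx⟩).not_gt hxy

end Sweep

section Plane

/-- Twice the signed area of the triangle `pqr`: it is positive when `r` lies strictly on the left
of the line directed from `p` to `q`. -/
def orient (p q r : ℝ × ℝ) : ℝ := det2 (q - p) (r - p)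

/-- The vector `u` turned by a quarter turn counterclockwise. -/
def perp (u : ℝ × ℝ) : ℝ × ℝ := (-u.2, u.1)

@[simp] lemma orient_self_left (p q : ℝ × ℝ) : orient p q p = 0 := by
  simp [orient, det2]

@[simp] lemma orient_self_right (p q : ℝ × ℝ) : orient p q q = 0 := by
  simp [orient, det2, mul_comm]

lemma orient_swap (p q r : ℝ × ℝ) : orient q p r = -orient p q r := by
  simp only [orient, det2, Prod.fst_sub, Prod.snd_sub]
  ring

lemma orient_rotate (p q r : ℝ × ℝ) : orient q r p = orient p q r := by
  simp only [orient, det2, Prod.fst_sub, Prod.snd_sub]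
  ring

lemma orient_swap_right (p q r : ℝ × ℝ) : orient p r q = -orient p q r := by
  rw [← orient_rotate, orient_swap, orient_rotate]

lemma det2_add_smul (a b w : ℝ × ℝ) (t : ℝ) : det2 (a + t • b) w = det2 a w + t * det2 b w := by
  simp only [det2, Prod.fst_add, Prod.snd_add, Prod.smul_fst, Prod.smul_snd, smul_eq_mul]
  ring

lemma dot2_add_smul (a b w : ℝ × ℝ) (t : ℝ) : dot2 (a + t • b) w = dot2 a w + t * dot2 b w := by
  simp only [dot2, Prod.fst_add, Prod.snd_add, Prod.smul_fst, Prod.smul_snd, smul_eq_mul]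
  ring

lemma dot2_sub_right (a w z : ℝ × ℝ) : dot2 a (w - z) = dot2 a w - dot2 a z := by
  simp only [dot2, Prod.fst_sub, Prod.snd_sub]
  ring

lemma det2_sub_sub (p q x z : ℝ × ℝ) :
    det2 (q - p) (z - x) = orient p q z - orient p q x := by
  simp only [orient, det2, Prod.fst_sub, Prod.snd_sub]
  ring

lemma det2_smul_smul (s t : ℝ) (u w : ℝ × ℝ) : det2 (s • u) (t • w) = s * t * det2 u w := by
  simp only [det2, Prod.smul_fst, Prod.smul_snd, smul_eq_mul]
  ring

lemma det2_smul_add_det2_smul_add_det2_smul (u₁ u₂ u₃ : ℝ × ℝ) :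
    det2 u₂ u₃ • u₁ + det2 u₃ u₁ • u₂ + det2 u₁ u₂ • u₃ = 0 := by
  ext <;>
    simp only [det2, Prod.fst_add, Prod.snd_add, Prod.smul_fst, Prod.smul_snd, smul_eq_mul,
      Prod.fst_zero, Prod.snd_zero] <;>
    ring

lemma det2_neg_left (a w : ℝ × ℝ) : det2 (-a) w = -det2 a w := by
  simp only [det2, Prod.fst_neg, Prod.snd_neg]
  ring

lemma det2_perp_left (u w : ℝ × ℝ) : det2 (perp u) w = -dot2 u w := by
  simp only [det2, dot2, perp]
  ring

lemma dot2_perp_left (u w : ℝ × ℝ) : dot2 (perp u) w = det2 u w := by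
  simp only [det2, dot2, perp]
  ring

lemma dot2_self_pos {u : ℝ × ℝ} (hu : u ≠ 0) : 0 < dot2 u u := by
  rcases not_and_or.1 (mt Prod.ext_iff.2 hu) with h | h
  · exact add_pos_of_pos_of_nonneg (mul_self_pos.2 h) (mul_self_nonneg _)
  · exact add_pos_of_nonneg_of_pos (mul_self_nonneg _) (mul_self_pos.2 h)

lemma dot2_self_smul (u w : ℝ × ℝ) : dot2 u u • w = dot2 u w • u + det2 u w • perp u := by
  ext <;>
    simp only [dot2, det2, perp, Prod.fst_add, Prod.snd_add, Prod.smul_fst, Prod.smul_snd,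
      smul_eq_mul] <;>
    ring

lemma exists_eq_smul_of_det2_eq_zero {u w : ℝ × ℝ} (hu : u ≠ 0) (h : det2 u w = 0) :
    ∃ t : ℝ, w = t • u := by
  refine ⟨(dot2 u u)⁻¹ * dot2 u w, ?_⟩
  rw [mul_smul, eq_inv_smul_iff₀ (dot2_self_pos hu).ne', dot2_self_smul, h, zero_smul, add_zero]

lemma collinear_iff_orient_eq_zero {p q r : ℝ × ℝ} :
    Collinear ℝ {p, q, r} ↔ orient p q r = 0 := by
  simp only [collinear_iff_of_mem (Set.mem_insert p _), Set.mem_insert_iff,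
    Set.mem_singleton_iff, vadd_eq_add, forall_eq_or_imp, forall_eq]
  constructor
  · rintro ⟨v, -, ⟨a, rfl⟩, b, rfl⟩
    simp only [orient, det2, add_sub_cancel_right, Prod.smul_fst, Prod.smul_snd, smul_eq_mul]
    ring
  · intro h
    rcases eq_or_ne q p with rfl | hqp
    · exact ⟨r - q, ⟨0, by simp⟩, ⟨0, by simp⟩, 1, by simp⟩
    · obtain ⟨t, ht⟩ := exists_eq_smul_of_det2_eq_zero (sub_ne_zero.2 hqp) h
      exact ⟨q - p, ⟨0, by simp⟩, ⟨1, by simp⟩, t, by simp [← ht]⟩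

end Plane

section GeneralPosition

variable {P : Finset (ℝ × ℝ)}

lemma GenPos.orient_ne_zero (h : GenPos P) {p q r : ℝ × ℝ} (hp : p ∈ P) (hq : q ∈ P) (hr : r ∈ P)
    (hpq : p ≠ q) (hpr : p ≠ r) (hqr : q ≠ r) : orient p q r ≠ 0 :=
  mt collinear_iff_orient_eq_zero.2 (h p hp q hq r hr hpq hpr hqr)

lemma GenPos.erase (h : GenPos P) (v : ℝ × ℝ) : GenPos (P.erase v) :=
  fun p hp q hq r hr => h p (mem_of_mem_erase hp) q (mem_of_mem_erase hq) r (mem_of_mem_erase hr)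

end GeneralPosition

section EnclosingTriangle

open AffineMap in
lemma exists_subset_convexHull_image_homothety {E : Type*} [AddCommGroup E] [Module ℝ E]
    [TopologicalSpace E] [IsTopologicalAddGroup E] [ContinuousSMul ℝ E] {s t : Set E} {c : E}
    (hc : c ∈ interior (convexHull ℝ s)) (ht : t.Finite) :
    ∃ R : ℝ, 0 < R ∧ t ⊆ convexHull ℝ (homothety c R '' s) := by
  have hnhds : (c + ·) ⁻¹' convexHull ℝ s ∈ nhds (0 : E) :=
    (continuous_const_add c).continuousAt (by simpa using mem_interior_iff_mem_nhds.1 hc)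
  obtain ⟨R, hR, hsub⟩ :=
    ((absorbent_nhds_zero hnhds (𝕜 := ℝ)).absorbs_finite (ht.image (· - c))).exists_pos
  refine ⟨R, hR, fun z hz => ?_⟩
  obtain ⟨y, hy, hyz⟩ := hsub R (le_abs_self R) ⟨z, hz, rfl⟩
  rw [← image_convexHull]
  refine ⟨c + y, hy, ?_⟩
  rw [homothety_apply, vsub_eq_sub, add_sub_cancel_left, vadd_eq_add, ← eq_sub_iff_add_eq]
  exact hyz

lemma exists_enclosing_triangle (P : Finset (ℝ × ℝ)) {e₁ e₂ e₃ : ℝ × ℝ} (hsum : e₁ + e₂ + e₃ = 0)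
    (hdet : det2 e₁ e₂ ≠ 0) :
    ∃ R : ℝ, 0 < R ∧ ∃ v₁ v₂ v₃ : ℝ × ℝ,
      v₂ - v₁ = R • e₁ ∧ v₃ - v₂ = R • e₂ ∧ v₁ - v₃ = R • e₃ ∧
      ¬ Collinear ℝ ({v₁, v₂, v₃} : Set (ℝ × ℝ)) ∧
      (P : Set (ℝ × ℝ)) ⊆ convexHull ℝ {v₁, v₂, v₃} := by
  have hdet_add : det2 e₁ (e₁ + e₂) = det2 e₁ e₂ := by
    simp only [det2, Prod.fst_add, Prod.snd_add]
    ring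
  have hind : AffineIndependent ℝ ![0, e₁, e₁ + e₂] := by
    rw [affineIndependent_iff_not_collinear_set, collinear_iff_orient_eq_zero]
    rwa [orient, sub_zero, sub_zero, hdet_add]
  have hspan := hind.affineSpan_eq_top_iff_card_eq_finrank_add_one.2
    (by simp [Module.finrank_prod])
  obtain ⟨c, hc⟩ := interior_convexHull_nonempty_iff_affineSpan_eq_top.2 hspan
  obtain ⟨R, hR, hsub⟩ := exists_subset_convexHull_image_homothety hc P.finite_toSet
  let φ := AffineMap.homothety c R
  have hφ : ∀ y z, φ y - φ z = R • (y - z) := fun y z => by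
    simp [φ, AffineMap.homothety_apply, ← smul_sub]
  refine ⟨R, hR, φ 0, φ e₁, φ (e₁ + e₂), by simp [hφ], by simp [hφ], ?_, ?_, ?_⟩
  · rw [hφ, zero_sub, eq_neg_of_add_eq_zero_right hsum]
  · rw [collinear_iff_orient_eq_zero, orient, hφ, hφ, sub_zero, sub_zero]
    rw [det2_smul_smul, hdet_add]
    exact mul_ne_zero (mul_ne_zero hR.ne' hR.ne') hdet
  · simpa [Fin.range_fin_succ, Set.image_insert_eq] using hsub

end EnclosingTriangle

section Decomposition

variable {P A B C X Y Z : Finset (ℝ × ℝ)} {u u₁ u₂ u₃ : ℝ × ℝ} {s : ℝ}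

/-- The projection along `u` shows all points of `Y` before all points of `X`, and these before all
points of `Z`. This is the first alternative of `ProjBetween`. -/
def ProjOrdered (u : ℝ × ℝ) (X Y Z : Finset (ℝ × ℝ)) : Prop :=
  ∀ x ∈ X, ∀ y ∈ Y, ∀ z ∈ Z, dot2 u y < dot2 u x ∧ dot2 u x < dot2 u z

lemma ProjOrdered.projBetween_smul (h : ProjOrdered u X Y Z) (hs : s ≠ 0) :
    ProjBetween (s • u) X Y Z := by
  have hdot : ∀ z, dot2 (s • u) z = s * dot2 u z := fun z => by
    simp only [dot2, Prod.smul_fst, Prod.smul_snd, smul_eq_mul]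
    ring
  simp only [ProjBetween, hdot]
  rcases hs.lt_or_gt with hneg | hpos
  · exact Or.inr fun x hx y hy z hz => (h x hx y hy z hz).symm.imp
      (mul_lt_mul_of_neg_left · hneg) (mul_lt_mul_of_neg_left · hneg)
  · exact Or.inl fun x hx y hy z hz => (h x hx y hy z hz).imp
      (mul_lt_mul_of_pos_left · hpos) (mul_lt_mul_of_pos_left · hpos)

lemma ProjOrdered.det2_ne_zero (h₁ : ProjOrdered u₁ X Y Z) (h₂ : ProjOrdered u₂ Y Z X)
    (hX : X.Nonempty) (hY : Y.Nonempty) (hZ : Z.Nonempty) : det2 u₁ u₂ ≠ 0 := by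
  obtain ⟨⟨x, hx⟩, ⟨y, hy⟩, ⟨z, hz⟩⟩ := And.intro hX (And.intro hY hZ)
  obtain ⟨hyx, hxz⟩ := h₁ x hx y hy z hz
  obtain ⟨hzy, hyx'⟩ := h₂ y hy z hz x hx
  have hlagrange : dot2 u₁ (x - y) * dot2 u₂ (y - z) - dot2 u₁ (y - z) * dot2 u₂ (x - y) =
      det2 u₁ u₂ * det2 (x - y) (y - z) := by
    simp only [det2, dot2]
    ring
  intro hzero
  rw [hzero, zero_mul] at hlagrange
  simp only [dot2_sub_right] at hlagrange
  have hpos := mul_pos (sub_pos.2 hyx) (sub_pos.2 hzy)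
  have hneg := mul_neg_of_neg_of_pos (sub_neg.2 (hyx.trans hxz)) (sub_pos.2 hyx')
  linarith

lemma ProjOrdered.ptSet3Decomposable (hP : A ∪ B ∪ C = P) (hA : A.Nonempty) (hAB : #A = #B)
    (hBC : #B = #C) (h₁ : ProjOrdered u₁ A B C) (h₂ : ProjOrdered u₂ B C A)
    (h₃ : ProjOrdered u₃ C A B) (hdAB : Disjoint A B) (hdBC : Disjoint B C) (hdCA : Disjoint C A) :
    PtSet3Decomposable P := by
  have hB : B.Nonempty := card_pos.1 (hAB ▸ card_pos.2 hA)
  have hC : C.Nonempty := card_pos.1 (hBC ▸ card_pos.2 hB)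
  have h₁₂ := h₁.det2_ne_zero h₂ hA hB hC
  have h₂₃ := h₂.det2_ne_zero h₃ hB hC hA
  have h₃₁ := h₃.det2_ne_zero h₁ hC hA hB
  obtain ⟨R, hR, v₁, v₂, v₃, hv₁, hv₂, hv₃, hcol, hsub⟩ := exists_enclosing_triangle P
    (det2_smul_add_det2_smul_add_det2_smul u₁ u₂ u₃)
    (by rw [det2_smul_smul]; exact mul_ne_zero (mul_ne_zero h₂₃ h₃₁) h₁₂)
  refine ⟨A, B, C, v₁, v₂, v₃, hP, hdAB, hdCA.symm, hdBC, hAB, hBC, hcol, hsub, ?_, ?_, ?_⟩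
  · rw [hv₁, smul_smul]
    exact h₁.projBetween_smul (mul_ne_zero hR.ne' h₂₃)
  · rw [hv₂, smul_smul]
    exact h₂.projBetween_smul (mul_ne_zero hR.ne' h₃₁)
  · rw [hv₃, smul_smul]
    exact h₃.projBetween_smul (mul_ne_zero hR.ne' h₁₂)

end Decomposition

section LeftCount

variable {P : Finset (ℝ × ℝ)} {p q v : ℝ × ℝ}

/-- The number of points of `P` strictly on the left of the line directed from `p` to `q`. -/
noncomputable def leftCount (P : Finset (ℝ × ℝ)) (p q : ℝ × ℝ) : ℕ := #{z ∈ P | 0 < orient p q z}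

lemma leftCount_swap (P : Finset (ℝ × ℝ)) (p q : ℝ × ℝ) :
    leftCount P q p = #{z ∈ P | orient p q z < 0} := by
  simp only [leftCount, orient_swap p q, neg_pos]

lemma GenPos.leftCount_add_leftCount_swap (h : GenPos P) (hp : p ∈ P) (hq : q ∈ P) (hpq : p ≠ q) :
    leftCount P p q + leftCount P q p + 2 = #P := by
  have hdisj : Disjoint {z ∈ P | 0 < orient p q z} {z ∈ P | orient p q z < 0} :=
    disjoint_filter.2 fun z _ => lt_asymm
  have hunion : {z ∈ P | 0 < orient p q z} ∪ {z ∈ P | orient p q z < 0} = P \ {p, q} := by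
    ext z
    simp only [mem_union, mem_filter, ← and_or_left, mem_sdiff, mem_insert, mem_singleton]
    refine and_congr_right fun hz => ⟨?_, fun hne => ?_⟩
    · rintro hsign (rfl | rfl) <;> simp at hsign
    · rw [not_or] at hne
      exact (h.orient_ne_zero hp hq hz hpq (Ne.symm hne.1) (Ne.symm hne.2)).lt_or_gt.symm
  rw [leftCount_swap P p, leftCount, ← card_union_of_disjoint hdisj, hunion, ← card_pair hpq]
  exact card_sdiff_add_card_eq_card (insert_subset hp (singleton_subset_iff.2 hq))

lemma leftCount_erase_of_pos (hv : v ∈ P) (h : 0 < orient p q v) :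
    leftCount (P.erase v) p q + 1 = leftCount P p q := by
  rw [leftCount, filter_erase]
  exact card_erase_add_one (mem_filter.2 ⟨hv, h⟩)

lemma leftCount_erase_of_nonpos (h : orient p q v ≤ 0) :
    leftCount (P.erase v) p q = leftCount P p q := by
  rw [leftCount, filter_erase, erase_eq_of_notMem (by simp [h]), leftCount]

lemma leftCount_eq_zero_iff : leftCount P p q = 0 ↔ ∀ z ∈ P, orient p q z ≤ 0 := by
  simp only [leftCount, card_eq_zero, filter_eq_empty_iff, not_lt]

end LeftCount

section HullVertex

variable {P : Finset (ℝ × ℝ)} {v x z : ℝ × ℝ} {k : ℕ}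

/-- `v` is a vertex of the convex hull of `P`: all other points of `P` lie strictly on one side of
a line through `v`, here on the left of the line with direction `d`. -/
def IsHullVertex (P : Finset (ℝ × ℝ)) (v : ℝ × ℝ) : Prop :=
  v ∈ P ∧ ∃ d : ℝ × ℝ, ∀ z ∈ P.erase v, 0 < det2 d (z - v)

lemma exists_isHullVertex (hP : P.Nonempty) : ∃ v, IsHullVertex P v := by
  obtain ⟨v, hv, hmax⟩ := P.exists_max_image (fun z => dot2 z z) hP
  refine ⟨v, hv, perp v, fun z hz => ?_⟩
  have hnorm := hmax z (mem_of_mem_erase hz)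
  have hdist := dot2_self_pos (sub_ne_zero.2 (ne_of_mem_erase hz))
  have hexpand : dot2 (z - v) (z - v) = dot2 z z - dot2 v v - 2 * dot2 v (z - v) := by
    simp only [dot2, Prod.fst_sub, Prod.snd_sub]
    ring
  rw [det2_perp_left]
  linarith

lemma IsHullVertex.exists_slope (h : GenPos P) (hv : IsHullVertex P v) :
    ∃ f : ℝ × ℝ → ℝ, Set.InjOn f (P.erase v : Finset (ℝ × ℝ)) ∧
      ∀ x ∈ P.erase v, ∀ z ∈ P.erase v, 0 < orient v x z ↔ f z < f x := by
  obtain ⟨hvP, d, hd⟩ := hv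
  have hslope : ∀ x ∈ P.erase v, ∀ z ∈ P.erase v, 0 < orient v x z ↔
      dot2 d (z - v) / det2 d (z - v) < dot2 d (x - v) / det2 d (x - v) := fun x hx z hz => by
    have hd0 : d ≠ 0 := by
      rintro rfl
      simpa [det2] using hd x hx
    have hcross : dot2 d (x - v) * det2 d (z - v) - dot2 d (z - v) * det2 d (x - v) =
        dot2 d d * orient v x z := by
      simp only [dot2, det2, orient]
      ring
    rw [div_lt_div_iff₀ (hd z hz) (hd x hx), ← sub_pos (b := _ * det2 d (x - v)), hcross,
      mul_pos_iff_of_pos_left (dot2_self_pos hd0)]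
  refine ⟨_, fun x hx z hz hxz => ?_, hslope⟩
  by_contra hne
  have hne0 : orient v x z ≠ 0 := h.orient_ne_zero hvP (mem_of_mem_erase hx) (mem_of_mem_erase hz)
    (ne_of_mem_erase hx).symm (ne_of_mem_erase hz).symm hne
  rcases hne0.lt_or_gt with hneg | hpos
  · rw [← neg_pos, ← orient_swap_right] at hneg
    exact ((hslope z hz x hx).1 hneg).ne hxz
  · exact ((hslope x hx z hz).1 hpos).ne' hxz

lemma leftCount_eq_rankIn {f : ℝ × ℝ → ℝ}
    (hf : ∀ x ∈ P.erase v, ∀ z ∈ P.erase v, 0 < orient v x z ↔ f z < f x) (hx : x ∈ P.erase v) :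
    leftCount P v x = rankIn (P.erase v) f x := by
  rw [← leftCount_erase_of_nonpos (orient_self_left v x).le]
  exact congrArg card (filter_congr (hf x hx))

lemma leftCount_swap_eq_rankIn {f : ℝ × ℝ → ℝ}
    (hf : ∀ x ∈ P.erase v, ∀ z ∈ P.erase v, 0 < orient v x z ↔ f z < f x) (hx : x ∈ P.erase v) :
    leftCount P x v = rankIn (P.erase v) (OrderDual.toDual ∘ f) x := by
  rw [← leftCount_erase_of_nonpos (orient_self_right x v).le]
  refine congrArg card (filter_congr fun z hz => ?_)
  rw [← orient_rotate, hf z hz x hx]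
  rfl

lemma IsHullVertex.exists_leftCount_eq (h : GenPos P) (hv : IsHullVertex P v) (hk : k + 1 < #P) :
    ∃ q ∈ P.erase v, leftCount P q v = k := by
  obtain ⟨f, hinj, hf⟩ := hv.exists_slope h
  have hcard : k < #(P.erase v) := by
    rw [card_erase_of_mem hv.1]
    omega
  obtain ⟨q, hq, hqk⟩ := exists_rankIn_eq (OrderDual.toDual.injective.comp_injOn hinj) hcard
  exact ⟨q, hq, (leftCount_swap_eq_rankIn hf hq).trans hqk⟩

lemma IsHullVertex.orient_pos_iff (h : GenPos P) (hv : IsHullVertex P v) (hx : x ∈ P.erase v)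
    (hz : z ∈ P.erase v) : 0 < orient v x z ↔ leftCount P x v < leftCount P z v := by
  obtain ⟨f, -, hf⟩ := hv.exists_slope h
  rw [leftCount_swap_eq_rankIn hf hx, leftCount_swap_eq_rankIn hf hz, rankIn_lt_rankIn_iff hx,
    hf x hx z hz]
  rfl

/-- The points `x` of `P` such that the directed line from `v` to `x` has at most `k` points of
`P` on its left. For a hull vertex `v` these are the first `k + 1` points in the clockwise order
around `v`. -/
noncomputable def outNeighbors (P : Finset (ℝ × ℝ)) (k : ℕ) (v : ℝ × ℝ) : Finset (ℝ × ℝ) :=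
  {x ∈ P.erase v | leftCount P v x ≤ k}

/-- The points `x` of `P` such that the directed line from `x` to `v` has at most `k` points of
`P` on its left. For a hull vertex `v` these are the last `k + 1` points in the clockwise order
around `v`. -/
noncomputable def inNeighbors (P : Finset (ℝ × ℝ)) (k : ℕ) (v : ℝ × ℝ) : Finset (ℝ × ℝ) :=
  {x ∈ P.erase v | leftCount P x v ≤ k}

lemma mem_outNeighbors : x ∈ outNeighbors P k v ↔ x ∈ P.erase v ∧ leftCount P v x ≤ k := mem_filter

lemma mem_inNeighbors : x ∈ inNeighbors P k v ↔ x ∈ P.erase v ∧ leftCount P x v ≤ k := mem_filter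

lemma inNeighbors_subset (P : Finset (ℝ × ℝ)) (k : ℕ) (v : ℝ × ℝ) : inNeighbors P k v ⊆ P :=
  (filter_subset _ _).trans (erase_subset _ _)

lemma IsHullVertex.card_outNeighbors (h : GenPos P) (hv : IsHullVertex P v) (hk : k + 1 < #P) :
    #(outNeighbors P k v) = k + 1 := by
  obtain ⟨f, hinj, hf⟩ := hv.exists_slope h
  rw [outNeighbors, filter_congr fun x hx => by rw [leftCount_eq_rankIn hf hx]]
  exact card_filter_rankIn_le hinj (by rw [card_erase_of_mem hv.1]; omega)

lemma IsHullVertex.card_inNeighbors (h : GenPos P) (hv : IsHullVertex P v) (hk : k + 1 < #P) :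
    #(inNeighbors P k v) = k + 1 := by
  obtain ⟨f, hinj, hf⟩ := hv.exists_slope h
  rw [inNeighbors, filter_congr fun x hx => by rw [leftCount_swap_eq_rankIn hf hx]]
  exact card_filter_rankIn_le (OrderDual.toDual.injective.comp_injOn hinj)
    (by rw [card_erase_of_mem hv.1]; omega)

lemma disjoint_outNeighbors_inNeighbors (h : GenPos P) (hv : v ∈ P) (hk : 2 * k + 2 < #P) :
    Disjoint (outNeighbors P k v) (inNeighbors P k v) := by
  refine disjoint_left.2 fun x hout hin => ?_
  rw [mem_outNeighbors, mem_erase] at hout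
  have hsum := h.leftCount_add_leftCount_swap hv hout.1.2 (Ne.symm hout.1.1)
  have hle := (mem_inNeighbors.1 hin).2
  omega

end HullVertex

section DirectedEdges

variable {P : Finset (ℝ × ℝ)} {p q v : ℝ × ℝ} {e : (ℝ × ℝ) × (ℝ × ℝ)} {k : ℕ}

/-- The directed `k`-edges of `P`, as ordered pairs of distinct points. Every `k`-edge in the sense
of `IsKEdge` is directed in exactly one way as long as `2 * k + 2 < #P`. -/
noncomputable def kEdges (P : Finset (ℝ × ℝ)) (k : ℕ) : Finset ((ℝ × ℝ) × (ℝ × ℝ)) :=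
  {e ∈ P.offDiag | leftCount P e.1 e.2 = k}

/-- The directed `j`-edges of `P` for all `j < k`. -/
noncomputable def ltEdges (P : Finset (ℝ × ℝ)) (k : ℕ) : Finset ((ℝ × ℝ) × (ℝ × ℝ)) :=
  {e ∈ P.offDiag | leftCount P e.1 e.2 < k}

/-- The directed `k`-edges of `P` that have `v` strictly on their right. -/
noncomputable def cutEdges (P : Finset (ℝ × ℝ)) (k : ℕ) (v : ℝ × ℝ) :
    Finset ((ℝ × ℝ) × (ℝ × ℝ)) :=
  {e ∈ kEdges P k | orient e.1 e.2 v < 0}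

lemma mem_kEdges :
    e ∈ kEdges P k ↔ e.1 ∈ P ∧ e.2 ∈ P ∧ e.1 ≠ e.2 ∧ leftCount P e.1 e.2 = k := by
  simp only [kEdges, mem_filter, mem_offDiag, and_assoc]

lemma mem_ltEdges :
    e ∈ ltEdges P k ↔ e.1 ∈ P ∧ e.2 ∈ P ∧ e.1 ≠ e.2 ∧ leftCount P e.1 e.2 < k := by
  simp only [ltEdges, mem_filter, mem_offDiag, and_assoc]

lemma mem_cutEdges : e ∈ cutEdges P k v ↔ e ∈ kEdges P k ∧ orient e.1 e.2 v < 0 := mem_filter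

lemma isKEdge_iff : IsKEdge P k p q ↔ p ≠ q ∧ (leftCount P p q = k ∨ leftCount P q p = k) := by
  rw [leftCount_swap P p q, leftCount, ← Set.ncard_coe_finset, ← Set.ncard_coe_finset, coe_filter,
    coe_filter]
  rfl

lemma GenPos.Ek_eq_card_kEdges (h : GenPos P) (hk : 2 * k + 2 < #P) : Ek P k = #(kEdges P k) := by
  have hinj : Set.InjOn (fun e : (ℝ × ℝ) × (ℝ × ℝ) => s(e.1, e.2)) (kEdges P k) := by
    rintro ⟨p, q⟩ hpq ⟨r, s⟩ hrs heq
    rw [mem_coe, mem_kEdges] at hpq hrs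
    rcases Sym2.eq_iff.1 heq with ⟨rfl, rfl⟩ | ⟨rfl, rfl⟩
    · rfl
    · dsimp only at hpq hrs
      have hsum := h.leftCount_add_leftCount_swap hpq.1 hpq.2.1 hpq.2.2.1
      omega
  have himage : {e : Sym2 (ℝ × ℝ) | ∃ p ∈ P, ∃ q ∈ P, e = s(p, q) ∧ IsKEdge P k p q} =
      (kEdges P k).image (fun e : (ℝ × ℝ) × (ℝ × ℝ) => s(e.1, e.2)) := by
    refine Set.ext fun e => ?_
    simp only [isKEdge_iff, coe_image, Set.mem_image, mem_coe, mem_kEdges]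
    constructor
    · rintro ⟨p, hp, q, hq, rfl, hne, hpq | hqp⟩
      · exact ⟨(p, q), ⟨hp, hq, hne, hpq⟩, rfl⟩
      · exact ⟨(q, p), ⟨hq, hp, hne.symm, hqp⟩, Sym2.eq_swap⟩
    · rintro ⟨⟨p, q⟩, ⟨hp, hq, hne, hpq⟩, rfl⟩
      exact ⟨p, hp, q, hq, rfl, hne, Or.inl hpq⟩
  rw [Ek, himage, Set.ncard_coe_finset, card_image_of_injOn hinj]

lemma card_ltEdges_succ (P : Finset (ℝ × ℝ)) (k : ℕ) :
    #(ltEdges P (k + 1)) = #(ltEdges P k) + #(kEdges P k) := by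
  rw [ltEdges, ltEdges, kEdges, ← card_union_of_disjoint (disjoint_filter.2 fun _ _ => LT.lt.ne),
    ← filter_or]
  simp only [Nat.lt_succ_iff_lt_or_eq]

lemma GenPos.EleK_eq_card_ltEdges (h : GenPos P) (hk : 2 * k + 2 < #P) :
    EleK P k = #(ltEdges P (k + 1)) := by
  induction k with
  | zero => simp [EleK, h.Ek_eq_card_kEdges hk, ltEdges, kEdges]
  | succ k ih =>
    rw [card_ltEdges_succ, ← ih (by omega), ← h.Ek_eq_card_kEdges hk, EleK, sum_range_succ, EleK]

end DirectedEdges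

section Rotation

variable {P : Finset (ℝ × ℝ)} {v w x : ℝ × ℝ} {k : ℕ}

/-- Turn the line through `x` with direction `w` about `x` until it passes through `v`. -/
lemma GenPos.exists_mem_cutEdges_of_rotation (h : GenPos P) (hx : x ∈ P)
    (hw : #{z ∈ P | 0 < det2 w (z - x)} ≤ k) (hv : k < leftCount P v x)
    (hwv : det2 w (v - x) < 0) :
    ∃ y, (y, x) ∈ cutEdges P k v ∧ det2 w (y - x) ≤ 0 := by
  have hcross : ∀ y z, det2 w (z - x) * orient v x y - det2 w (y - x) * orient v x z =
      -det2 w (v - x) * orient y x z := fun y z => by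
    simp only [orient, det2, Prod.fst_sub, Prod.snd_sub]
    ring
  have hinj : Set.InjOn (fun z => det2 w (z - x) / orient v x z) {z ∈ P | 0 < orient v x z} := by
    rintro y ⟨hy, hy0 : 0 < orient v x y⟩ z ⟨hz, hz0 : 0 < orient v x z⟩
      (hyz : det2 w (y - x) / orient v x y = det2 w (z - x) / orient v x z)
    rw [eq_comm, div_eq_div_iff hz0.ne' hy0.ne', ← sub_eq_zero, hcross, mul_eq_zero,
      or_iff_right (neg_pos.2 hwv).ne'] at hyz
    by_contra hne
    refine h.orient_ne_zero hy hx hz ?_ hne ?_ hyz <;> rintro rfl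
    exacts [hy0.ne' (orient_self_right v y), hz0.ne' (orient_self_right v x)]
  obtain ⟨y, hy, hy0, hyw, hcard⟩ := exists_card_slope_eq hw hv hinj
  have hyx : y ≠ x := by
    rintro rfl
    exact hy0.ne' (orient_self_right v y)
  refine ⟨y, mem_cutEdges.2 ⟨mem_kEdges.2 ⟨hy, hx, hyx, ?_⟩, ?_⟩, hyw⟩
  · simpa only [leftCount, hcross, mul_pos_iff_of_pos_left (neg_pos.2 hwv)] using hcard
  · rwa [← orient_rotate, orient_swap, neg_lt_zero]

end Rotation

section Counting

variable {P : Finset (ℝ × ℝ)} {v x : ℝ × ℝ} {k : ℕ}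

/-- Tilt the line from `x` to `v` slightly about `x` so that `v` comes to lie on its right. -/
lemma GenPos.exists_tilt (h : GenPos P) (hx : x ∈ P) (hv : v ∈ P) (hxv : x ≠ v) :
    ∃ w, ∀ z ∈ P.erase x, orient x v z ≤ 0 → det2 w (z - x) < 0 := by
  obtain ⟨ε, -, htilt⟩ := exists_pos_forall_add_mul_pos (s := {z ∈ P.erase x | orient x v z ≤ 0})
    (f := fun z => -orient x v z) (g := fun z => dot2 (v - x) (z - x)) fun z hz => by
      rw [mem_filter, mem_erase] at hz
      rcases eq_or_ne v z with rfl | hvz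
      · exact Or.inr ⟨by simp, dot2_self_pos (sub_ne_zero.2 hxv.symm)⟩
      · exact Or.inl (neg_pos.2 (hz.2.lt_of_ne
          (h.orient_ne_zero hx hv hz.1.2 hxv hz.1.1.symm hvz)))
  refine ⟨v - x + ε • perp (v - x), fun z hz hle => ?_⟩
  have hpos := htilt z (mem_filter.2 ⟨hz, hle⟩)
  rw [orient] at hpos
  rw [det2_add_smul, det2_perp_left]
  linarith

lemma GenPos.inNeighbors_subset_image_cutEdges (h : GenPos P) (hv : v ∈ P) (hk : 2 * k + 2 < #P) :
    inNeighbors P k v ⊆ (cutEdges P k v).image Prod.snd := by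
  intro x hin
  obtain ⟨⟨hxv, hx⟩, hle⟩ := by simpa only [mem_inNeighbors, mem_erase] using hin
  have hsum := h.leftCount_add_leftCount_swap hx hv hxv
  obtain ⟨w, hw⟩ := h.exists_tilt hx hv hxv
  have hwk : #{z ∈ P | 0 < det2 w (z - x)} ≤ k := by
    refine (card_le_card (monotone_filter_right P fun z hz hpos => ?_)).trans hle
    rcases eq_or_ne z x with rfl | hzx
    · simp [det2] at hpos
    · exact not_le.1 fun hle => (hw z (mem_erase.2 ⟨hzx, hz⟩) hle).not_gt hpos
  obtain ⟨y, hyx, -⟩ := h.exists_mem_cutEdges_of_rotation hx hwk (by omega)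
    (hw v (mem_erase.2 ⟨hxv.symm, hv⟩) (orient_self_right x v).le)
  exact mem_image.2 ⟨(y, x), hyx, rfl⟩

lemma IsHullVertex.succ_le_card_cutEdges (h : GenPos P) (hv : IsHullVertex P v)
    (hk : 2 * k + 2 < #P) : k + 1 ≤ #(cutEdges P k v) := by
  rw [← hv.card_inNeighbors h (by omega)]
  exact (card_le_card (h.inNeighbors_subset_image_cutEdges hv.1 hk)).trans card_image_le

lemma IsHullVertex.image_snd_cutEdges (h : GenPos P) (hv : IsHullVertex P v) (hk : 2 * k + 2 < #P)
    (hcut : #(cutEdges P k v) = k + 1) : (cutEdges P k v).image Prod.snd = inNeighbors P k v := by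
  refine (eq_of_subset_of_card_le (h.inNeighbors_subset_image_cutEdges hv.1 hk) ?_).symm
  rw [hv.card_inNeighbors h (by omega), ← hcut]
  exact card_image_le

lemma GenPos.filter_ltEdges_eq_union (h : GenPos P) (hv : v ∈ P) :
    {e ∈ ltEdges P (k + 1) | e.1 ≠ v ∧ e.2 ≠ v} = ltEdges (P.erase v) k ∪ cutEdges P k v := by
  ext ⟨p, q⟩
  simp only [mem_filter, mem_union, mem_cutEdges, mem_kEdges, mem_ltEdges, mem_erase]
  by_cases hpq : p ∈ P ∧ q ∈ P ∧ p ≠ q ∧ p ≠ v ∧ q ≠ v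
  · have hne := h.orient_ne_zero hpq.1 hpq.2.1 hv hpq.2.2.1 hpq.2.2.2.1 hpq.2.2.2.2
    rcases hne.lt_or_gt with hneg | hpos
    · have := leftCount_erase_of_nonpos (P := P) hneg.le
      grind
    · have := leftCount_erase_of_pos hv hpos
      grind
  · have : p = v → orient p q v = 0 := by rintro rfl; simp
    have : q = v → orient p q v = 0 := by rintro rfl; simp
    grind

lemma disjoint_ltEdges_erase_cutEdges : Disjoint (ltEdges (P.erase v) k) (cutEdges P k v) := by
  refine disjoint_left.2 fun e hlt hcut => ?_
  rw [mem_cutEdges, mem_kEdges] at hcut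
  have heq := leftCount_erase_of_nonpos (P := P) hcut.2.le
  have hlt' := (mem_ltEdges.1 hlt).2.2.2
  omega

lemma IsHullVertex.card_ltEdges_succ (h : GenPos P) (hv : IsHullVertex P v) (hk : k + 1 < #P) :
    #(ltEdges P (k + 1)) = 2 * (k + 1) + #(ltEdges (P.erase v) k) + #(cutEdges P k v) := by
  have hfst : {e ∈ ltEdges P (k + 1) | e.1 = v} = {v} ×ˢ outNeighbors P k v := by
    ext ⟨p, q⟩
    have := hv.1
    simp only [mem_filter, mem_ltEdges, mem_product, mem_singleton, mem_outNeighbors, mem_erase]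
    grind
  have hsnd : {e ∈ ltEdges P (k + 1) | e.1 ≠ v ∧ e.2 = v} = inNeighbors P k v ×ˢ {v} := by
    ext ⟨p, q⟩
    have := hv.1
    simp only [mem_filter, mem_ltEdges, mem_product, mem_singleton, mem_inNeighbors, mem_erase]
    grind
  have hsplit : #{e ∈ ltEdges P (k + 1) | e.1 = v} +
      (#{e ∈ ltEdges P (k + 1) | e.1 ≠ v ∧ e.2 = v} +
        #{e ∈ ltEdges P (k + 1) | e.1 ≠ v ∧ e.2 ≠ v}) = #(ltEdges P (k + 1)) := by
    simp only [← filter_filter, ne_eq, card_filter_add_card_filter_not]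
  rw [← hsplit, hfst, hsnd, h.filter_ltEdges_eq_union hv.1,
    card_union_of_disjoint disjoint_ltEdges_erase_cutEdges, card_product, card_product,
    hv.card_outNeighbors h hk, hv.card_inNeighbors h hk, card_singleton]
  ring

lemma choose_succ_two (k : ℕ) : (k + 1).choose 2 = k.choose 2 + k := by
  rw [Nat.choose_succ_succ', Nat.choose_one_right, add_comm]

lemma GenPos.three_mul_choose_le_card_ltEdges (h : GenPos P) (hk : 2 * k < #P) :
    3 * (k + 1).choose 2 ≤ #(ltEdges P k) := by
  induction k generalizing P with
  | zero => simp
  | succ k ih =>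
    obtain ⟨v, hv⟩ := exists_isHullVertex (P := P) (card_pos.1 (by omega))
    have herase := ih (h.erase v) (by rw [card_erase_of_mem hv.1]; omega)
    have hcut := hv.succ_le_card_cutEdges h (k := k) (by omega)
    rw [hv.card_ltEdges_succ h (by omega), choose_succ_two]
    omega

lemma IsHullVertex.card_cutEdges_eq (h : GenPos P) (hv : IsHullVertex P v) (hk : 2 * k + 2 < #P)
    (hmin : #(ltEdges P (k + 1)) = 3 * (k + 2).choose 2) : #(cutEdges P k v) = k + 1 := by
  have herase := (h.erase v).three_mul_choose_le_card_ltEdges (k := k)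
    (by rw [card_erase_of_mem hv.1]; omega)
  have hcut := hv.succ_le_card_cutEdges h hk
  rw [hv.card_ltEdges_succ h (by omega), choose_succ_two] at hmin
  omega

end Counting

section Separation

variable {P : Finset (ℝ × ℝ)} {q v x y z : ℝ × ℝ} {k : ℕ}

/-- The points of `P`, among them `v` itself, that are neither in `outNeighbors P k v` nor in
`inNeighbors P k v`. -/
noncomputable def midPoints (P : Finset (ℝ × ℝ)) (k : ℕ) (v : ℝ × ℝ) : Finset (ℝ × ℝ) :=
  P \ (outNeighbors P k v ∪ inNeighbors P k v)

lemma mem_midPoints :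
    x ∈ midPoints P k v ↔ x ∈ P ∧ x ∉ outNeighbors P k v ∧ x ∉ inNeighbors P k v := by
  rw [midPoints, mem_sdiff, notMem_union]

lemma mem_midPoints_self (hv : v ∈ P) : v ∈ midPoints P k v := by
  simp [mem_midPoints, mem_outNeighbors, mem_inNeighbors, hv]

lemma IsHullVertex.eq_or_orient_pos (h : GenPos P) (hv : IsHullVertex P v) (hq : q ∈ P.erase v)
    (hqk : leftCount P q v = k) (hz : z ∈ inNeighbors P k v) : z = q ∨ 0 < orient q v z := by
  obtain ⟨hzv, hzk⟩ := mem_inNeighbors.1 hz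
  refine or_iff_not_imp_left.2 fun hzq => ?_
  have hne := h.orient_ne_zero hv.1 (mem_of_mem_erase hq) (mem_of_mem_erase hzv)
    (ne_of_mem_erase hq).symm (ne_of_mem_erase hzv).symm (Ne.symm hzq)
  have hle : orient v q z ≤ 0 := not_lt.1 fun hpos => by
    rw [hv.orient_pos_iff h hq hzv] at hpos
    omega
  rw [orient_swap, neg_pos]
  exact hle.lt_of_ne hne

lemma IsHullVertex.orient_neg_of_mem_midPoints (h : GenPos P) (hv : IsHullVertex P v)
    (hq : q ∈ P.erase v) (hqk : leftCount P q v = k) (hy : y ∈ midPoints P k v) (hyv : y ≠ v) :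
    orient q v y < 0 := by
  obtain ⟨hyP, -, hin⟩ := mem_midPoints.1 hy
  have hyP' : y ∈ P.erase v := mem_erase.2 ⟨hyv, hyP⟩
  rw [orient_swap, neg_lt_zero, hv.orient_pos_iff h hq hyP', hqk]
  exact not_le.1 fun hle => hin (mem_inNeighbors.2 ⟨hyP', hle⟩)

lemma IsHullVertex.lt_card_filter_orient_lt (h : GenPos P) (hv : IsHullVertex P v)
    (hk : 2 * k + 2 < #P) (hcut : (cutEdges P k v).image Prod.snd ⊆ inNeighbors P k v)
    (hq : q ∈ P.erase v) (hqk : leftCount P q v = k) (hx : x ∈ midPoints P k v) :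
    k < #{z ∈ P | orient q v z < orient q v x} := by
  obtain ⟨hxP, hout, hin⟩ := mem_midPoints.1 hx
  rcases eq_or_ne x v with rfl | hxv
  · have hsum := h.leftCount_add_leftCount_swap (mem_of_mem_erase hq) hxP (ne_of_mem_erase hq)
    rw [orient_self_right, ← leftCount_swap]
    omega
  · by_contra! hle
    have hdet : ∀ z, det2 (q - v) (z - x) = orient q v x - orient q v z := fun z => by
      rw [det2_sub_sub, orient_swap q v, orient_swap q v, neg_sub_neg]
    have hlt : k < leftCount P v x :=
      not_le.1 fun hle => hout (mem_outNeighbors.2 ⟨mem_erase.2 ⟨hxv, hxP⟩, hle⟩)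
    obtain ⟨y, hyx, -⟩ := h.exists_mem_cutEdges_of_rotation (w := q - v) hxP
      (by simpa only [hdet, sub_pos] using hle) hlt (by
        rw [hdet, orient_self_right, sub_zero]
        exact hv.orient_neg_of_mem_midPoints h hq hqk hx hxv)
    exact hin (hcut (mem_image.2 ⟨(y, x), hyx, rfl⟩))

lemma IsHullVertex.orient_lt_orient (h : GenPos P) (hv : IsHullVertex P v) (hk : 2 * k + 2 < #P)
    (hcut : (cutEdges P k v).image Prod.snd ⊆ inNeighbors P k v) (hq : q ∈ P.erase v)
    (hqk : leftCount P q v = k) (hx : x ∈ outNeighbors P k v) (hy : y ∈ midPoints P k v) :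
    orient q v x < orient q v y := by
  obtain ⟨m, hm, hmin⟩ := exists_min_image (midPoints P k v) (orient q v) ⟨y, hy⟩
  have hsub : {z ∈ P | orient q v z < orient q v m} ⊆ outNeighbors P k v := by
    intro z hz
    obtain ⟨hzP, hzm⟩ := mem_filter.1 hz
    have hmv := hmin v (mem_midPoints_self hv.1)
    rw [orient_self_right] at hmv
    by_contra hzout
    by_cases hzin : z ∈ inNeighbors P k v
    · rcases hv.eq_or_orient_pos h hq hqk hzin with rfl | hpos
      · rw [orient_self_left] at hzm
        exact hmv.not_gt hzm
      · exact (hzm.trans_le hmv).not_gt hpos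
    · exact (hmin z (mem_midPoints.2 ⟨hzP, hzout, hzin⟩)).not_gt hzm
  have heq := eq_of_subset_of_card_le hsub (by
    rw [hv.card_outNeighbors h (by omega)]
    exact hv.lt_card_filter_orient_lt h hk hcut hq hqk hm)
  rw [← heq, mem_filter] at hx
  exact hx.2.trans_le (hmin y hy)

/-- The line from `q` to `v` separates the three sets, except that it contains both `q` and `v`;
tilting it slightly separates these two points as well. -/
lemma IsHullVertex.exists_projOrdered (h : GenPos P) (hv : IsHullVertex P v) (hk : 2 * k + 2 < #P)
    (hcut : (cutEdges P k v).image Prod.snd ⊆ inNeighbors P k v) :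
    ∃ u, ProjOrdered u (midPoints P k v) (outNeighbors P k v) (inNeighbors P k v) := by
  obtain ⟨q, hq, hqk⟩ := hv.exists_leftCount_eq h (k := k) (by omega)
  obtain ⟨ε, -, htilt⟩ := exists_pos_forall_add_mul_pos
    (s := outNeighbors P k v ×ˢ midPoints P k v ∪ midPoints P k v ×ˢ inNeighbors P k v)
    (f := fun e => det2 (v - q) (e.2 - e.1)) (g := fun e => dot2 (q - v) (e.2 - e.1)) (by
      rintro ⟨y, z⟩ hyz
      rw [det2_sub_sub, sub_pos, sub_eq_zero]
      rcases mem_union.1 hyz with hyz | hyz <;> obtain ⟨hy, hz⟩ := mem_product.1 hyz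
      · exact Or.inl (hv.orient_lt_orient h hk hcut hq hqk hy hz)
      · rcases eq_or_ne y v with rfl | hyv <;>
          rcases hv.eq_or_orient_pos h hq hqk hz with rfl | hpos
        · exact Or.inr ⟨by simp, dot2_self_pos (sub_ne_zero.2 (ne_of_mem_erase hq))⟩
        · exact Or.inl (by simpa using hpos)
        · exact Or.inl (by simpa using hv.orient_neg_of_mem_midPoints h hq hqk hy hyv)
        · exact Or.inl ((hv.orient_neg_of_mem_midPoints h hq hqk hy hyv).trans hpos))
  have hlt : ∀ y z, 0 < det2 (v - q) (z - y) + ε * dot2 (q - v) (z - y) →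
      dot2 (perp (v - q) + ε • (q - v)) y < dot2 (perp (v - q) + ε • (q - v)) z := by
    intro y z hpos
    rw [← dot2_perp_left, ← dot2_add_smul, dot2_sub_right] at hpos
    exact sub_pos.1 hpos
  exact ⟨_, fun y hy x hx z hz =>
    ⟨hlt x y (htilt (x, y) (mem_union_left _ (mk_mem_product hx hy))),
      hlt y z (htilt (y, z) (mem_union_right _ (mk_mem_product hy hz)))⟩⟩

end Separation

section TriangularHull

variable {P : Finset (ℝ × ℝ)} {a b c p q x z : ℝ × ℝ} {k : ℕ}

lemma orient_nonpos_of_mem_kEdges_zero (hpq : (p, q) ∈ kEdges P 0) (hz : z ∈ P) :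
    orient p q z ≤ 0 :=
  leftCount_eq_zero_iff.1 (mem_kEdges.1 hpq).2.2.2 z hz

lemma GenPos.orient_neg_of_mem_kEdges_zero (h : GenPos P) (hpq : (p, q) ∈ kEdges P 0) (hz : z ∈ P)
    (hzp : z ≠ p) (hzq : z ≠ q) : orient p q z < 0 := by
  obtain ⟨hp, hq, hne, -⟩ := mem_kEdges.1 hpq
  exact (orient_nonpos_of_mem_kEdges_zero hpq hz).lt_of_ne
    (h.orient_ne_zero hp hq hz hne hzp.symm hzq.symm)

lemma GenPos.lt_leftCount_swap (h : GenPos P) (hk : 2 * k + 2 < #P) (hpq : (p, q) ∈ kEdges P 0) :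
    k < leftCount P q p := by
  obtain ⟨hp, hq, hne, hzero⟩ := mem_kEdges.1 hpq
  have hsum := h.leftCount_add_leftCount_swap hp hq hne
  dsimp only at hzero hsum
  omega

lemma GenPos.isHullVertex_fst (h : GenPos P) (hpq : (p, q) ∈ kEdges P 0) : IsHullVertex P p := by
  obtain ⟨hp, hq, hne, -⟩ := mem_kEdges.1 hpq
  obtain ⟨w, hw⟩ := h.exists_tilt hp hq hne
  refine ⟨hp, -w, fun z hz => ?_⟩
  rw [det2_neg_left, neg_pos]
  exact hw z hz (orient_nonpos_of_mem_kEdges_zero hpq (mem_of_mem_erase hz))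

lemma IsHullVertex.exists_mem_kEdges_zero (h : GenPos P) (hq : IsHullVertex P q) (hP : 1 < #P) :
    ∃ p, (p, q) ∈ kEdges P 0 ∧ IsHullVertex P p := by
  obtain ⟨p, hp, hzero⟩ := hq.exists_leftCount_eq h hP
  have hpq : (p, q) ∈ kEdges P 0 :=
    mem_kEdges.2 ⟨mem_of_mem_erase hp, hq.1, ne_of_mem_erase hp, hzero⟩
  exact ⟨p, hpq, h.isHullVertex_fst hpq⟩

/-- The convex hull of `P` is the triangle `abc`, whose vertices are listed clockwise. -/
def IsTriangularHull (P : Finset (ℝ × ℝ)) (a b c : ℝ × ℝ) : Prop :=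
  (a, b) ∈ kEdges P 0 ∧ (b, c) ∈ kEdges P 0 ∧ (c, a) ∈ kEdges P 0

lemma IsTriangularHull.rotate (ht : IsTriangularHull P a b c) : IsTriangularHull P b c a :=
  ⟨ht.2.1, ht.2.2, ht.1⟩

lemma GenPos.exists_isTriangularHull (h : GenPos P) (hP : 2 < #P) (hedges : #(kEdges P 0) = 3) :
    ∃ a b c, IsTriangularHull P a b c := by
  obtain ⟨d, hd⟩ := exists_isHullVertex (P := P) (card_pos.1 (by omega))
  obtain ⟨c, hcd, hc⟩ := hd.exists_mem_kEdges_zero h (by omega)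
  obtain ⟨b, hbc, hb⟩ := hc.exists_mem_kEdges_zero h (by omega)
  obtain ⟨a, hab, ha⟩ := hb.exists_mem_kEdges_zero h (by omega)
  obtain ⟨z, hza, -⟩ := ha.exists_mem_kEdges_zero h (by omega)
  have hswap : ∀ {p q}, (p, q) ∈ kEdges P 0 → (q, p) ∉ kEdges P 0 := fun {p q} hpq hqp =>
    (h.lt_leftCount_swap hP hpq).ne' (mem_kEdges.1 hqp).2.2.2
  have had : a = d := by
    by_contra hne
    have hsub : ({(c, d), (b, c), (a, b), (z, a)} : Finset _) ⊆ kEdges P 0 := by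
      simp only [insert_subset_iff, singleton_subset_iff]
      exact ⟨hcd, hbc, hab, hza⟩
    have hcard : #({(c, d), (b, c), (a, b), (z, a)} : Finset _) = 4 := by
      have hbd : b ≠ d := by
        rintro rfl
        exact hswap hbc hcd
      have hac : a ≠ c := by
        rintro rfl
        exact hswap hab hbc
      simp [hbd.symm, hac.symm, Ne.symm hne, (mem_kEdges.1 hcd).2.2.1.symm,
        (mem_kEdges.1 hbc).2.2.1.symm, (mem_kEdges.1 hab).2.2.1.symm]
    have := card_le_card hsub
    omega
  subst had
  exact ⟨a, b, c, hab, hbc, hcd⟩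

lemma orient_mul_orient_eq_barycentric (a b c p q z : ℝ × ℝ) :
    orient a b c * orient p q z =
      orient b c z * orient p q a + orient c a z * orient p q b + orient a b z * orient p q c := by
  simp only [orient, det2, Prod.fst_sub, Prod.snd_sub]
  ring

lemma IsTriangularHull.orient_neg (h : GenPos P) (ht : IsTriangularHull P a b c) :
    orient a b c < 0 := by
  obtain ⟨hc, -, hca, -⟩ := mem_kEdges.1 ht.2.2
  exact h.orient_neg_of_mem_kEdges_zero ht.1 hc hca (mem_kEdges.1 ht.2.1).2.2.1.symm

lemma IsTriangularHull.orient_nonneg (h : GenPos P) (ht : IsTriangularHull P a b c)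
    (ha : 0 ≤ orient p q a) (hb : 0 ≤ orient p q b) (hc : 0 ≤ orient p q c) (hz : z ∈ P) :
    0 ≤ orient p q z := by
  refine nonneg_of_mul_nonpos_right ?_ (ht.orient_neg h)
  rw [orient_mul_orient_eq_barycentric]
  have hbc := mul_nonpos_of_nonpos_of_nonneg (orient_nonpos_of_mem_kEdges_zero ht.2.1 hz) ha
  have hca := mul_nonpos_of_nonpos_of_nonneg (orient_nonpos_of_mem_kEdges_zero ht.2.2 hz) hb
  have hab := mul_nonpos_of_nonpos_of_nonneg (orient_nonpos_of_mem_kEdges_zero ht.1 hz) hc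
  linarith

lemma IsTriangularHull.kEdges_subset_union (h : GenPos P) (ht : IsTriangularHull P a b c)
    (hk : k + 2 < #P) :
    kEdges P k ⊆ cutEdges P k a ∪ cutEdges P k b ∪ cutEdges P k c := by
  rintro ⟨p, q⟩ he
  simp only [mem_union, mem_cutEdges, he, true_and]
  by_contra! hnonneg
  obtain ⟨hp, hq, hpq, hpqk⟩ := mem_kEdges.1 he
  have hsum := h.leftCount_add_leftCount_swap hp hq hpq
  have hzero : leftCount P q p = 0 := leftCount_eq_zero_iff.2 fun z hz => by
    rw [orient_swap, neg_nonpos]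
    exact ht.orient_nonneg h hnonneg.1.1 hnonneg.1.2 hnonneg.2 hz
  dsimp only at hpqk hsum
  omega

lemma IsTriangularHull.disjoint_cutEdges (h : GenPos P) (ht : IsTriangularHull P a b c)
    (hk : k + 2 < #P) (hedges : #(kEdges P k) = 3 * (k + 1))
    (hcut : ∀ v, IsHullVertex P v → #(cutEdges P k v) = k + 1) :
    Disjoint (cutEdges P k a) (cutEdges P k b) := by
  have ha := hcut a (h.isHullVertex_fst ht.1)
  have hb := hcut b (h.isHullVertex_fst ht.2.1)
  have hc := hcut c (h.isHullVertex_fst ht.2.2)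
  have hle := (card_le_card (ht.kEdges_subset_union h hk)).trans (card_union_le _ _)
  rw [← card_union_eq_card_add_card]
  have := card_union_le (cutEdges P k a) (cutEdges P k b)
  omega

/-- Start with the `k`-edge `qa`, shift it to `x`, and turn it about `x` towards `b`: the first line
with exactly `k` points on its left is a `k`-edge `yx` with both `a` and `b` on its right. -/
lemma IsHullVertex.exists_mem_cutEdges_inter (h : GenPos P) (ha : IsHullVertex P a)
    (hab : (a, b) ∈ kEdges P 0) (hk : 2 * k + 2 < #P) (hx : x ∈ inNeighbors P k a)
    (hbx : k < leftCount P b x) : ∃ e ∈ cutEdges P k a, e ∈ cutEdges P k b := by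
  obtain ⟨q, hq, hqk⟩ := ha.exists_leftCount_eq h (k := k) (by omega)
  obtain ⟨hxa, hxP⟩ := mem_erase.1 (mem_inNeighbors.1 hx).1
  obtain ⟨hqa, hqP⟩ := mem_erase.1 hq
  have hbk := h.lt_leftCount_swap hk hab
  have hqb : q ≠ b := by
    rintro rfl
    exact hbk.ne' hqk
  have hqax : 0 ≤ orient q a x := by
    rcases ha.eq_or_orient_pos h hq hqk hx with rfl | hpos
    exacts [(orient_self_left _ _).ge, hpos.le]
  have hqab : orient q a b < 0 := by
    rw [← orient_rotate]
    exact h.orient_neg_of_mem_kEdges_zero hab hqP hqa hqb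
  have habx := orient_nonpos_of_mem_kEdges_zero hab hxP
  have hwk : #{z ∈ P | 0 < det2 (a - q) (z - x)} ≤ k := by
    refine (card_le_card (monotone_filter_right P fun z _ hpos => ?_)).trans hqk.le
    rw [det2_sub_sub] at hpos
    linarith
  obtain ⟨y, hyb, hyw⟩ := h.exists_mem_cutEdges_of_rotation hxP hwk hbx
    (by rw [det2_sub_sub]; linarith)
  rw [det2_sub_sub] at hyw
  obtain ⟨hyx, hneg⟩ := mem_cutEdges.1 hyb
  obtain ⟨hy, -, hne, -⟩ := mem_kEdges.1 hyx
  have hya : y ≠ a := by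
    rintro rfl
    rw [orient_swap_right] at hneg
    linarith
  have hyxa : orient y x a ≤ 0 := by
    have hcross : orient y x a * (orient q a x - orient q a b) =
        orient a b x * (orient q a x - orient q a y) + orient q a x * orient y x b := by
      simp only [orient, det2, Prod.fst_sub, Prod.snd_sub]
      ring
    refine nonpos_of_mul_nonpos_left (hcross.trans_le (add_nonpos ?_ ?_)) (by linarith)
    exacts [mul_nonpos_of_nonpos_of_nonneg habx (sub_nonneg.2 (by linarith)),
      mul_nonpos_of_nonneg_of_nonpos hqax hneg.le]
  exact ⟨(y, x), mem_cutEdges.2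
    ⟨hyx, hyxa.lt_of_ne (h.orient_ne_zero hy hxP ha.1 hne hya hxa)⟩, hyb⟩

lemma IsTriangularHull.inNeighbors_eq_outNeighbors (h : GenPos P) (ht : IsTriangularHull P a b c)
    (hk : 2 * k + 2 < #P) (hdisj : Disjoint (cutEdges P k a) (cutEdges P k b)) :
    inNeighbors P k a = outNeighbors P k b := by
  have ha := h.isHullVertex_fst ht.1
  have hb := h.isHullVertex_fst ht.2.1
  refine eq_of_subset_of_card_le (fun x hx => ?_) (by
    rw [hb.card_outNeighbors h (by omega), ha.card_inNeighbors h (by omega)])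
  have hba := h.lt_leftCount_swap hk ht.1
  have hxb : x ≠ b := by
    rintro rfl
    exact hba.not_ge (mem_inNeighbors.1 hx).2
  refine mem_outNeighbors.2
    ⟨mem_erase.2 ⟨hxb, inNeighbors_subset P k a hx⟩, not_lt.1 fun hlt => ?_⟩
  obtain ⟨e, hea, heb⟩ := ha.exists_mem_cutEdges_inter h ht.1 hk hx hlt
  exact disjoint_left.1 hdisj hea heb

end TriangularHull

section Main

variable {P : Finset (ℝ × ℝ)} {a b c : ℝ × ℝ} {k : ℕ}

lemma IsTriangularHull.exists_projOrdered (h : GenPos P) (ht : IsTriangularHull P a b c)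
    (hk : 2 * k + 2 < #P) (hcut : #(cutEdges P k a) = k + 1)
    (hab : Disjoint (inNeighbors P k a) (inNeighbors P k b))
    (hbc : Disjoint (inNeighbors P k b) (inNeighbors P k c))
    (hca : inNeighbors P k c = outNeighbors P k a) :
    ∃ u, ProjOrdered u (inNeighbors P k b) (inNeighbors P k c) (inNeighbors P k a) := by
  have ha := h.isHullVertex_fst ht.1
  obtain ⟨u, hu⟩ := ha.exists_projOrdered h hk (ha.image_snd_cutEdges h hk hcut).subset
  rw [← hca] at hu
  refine ⟨u, fun x hx => hu x (mem_midPoints.2 ⟨?_, ?_, disjoint_right.1 hab hx⟩)⟩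
  · exact inNeighbors_subset P k b hx
  · rw [← hca]
    exact disjoint_left.1 hbc hx

lemma IsTriangularHull.ptSet3Decomposable (h : GenPos P) (ht : IsTriangularHull P a b c)
    (hcard : #P = 3 * (k + 1)) (hcut : ∀ v, IsHullVertex P v → #(cutEdges P k v) = k + 1)
    (hab : inNeighbors P k a = outNeighbors P k b) (hbc : inNeighbors P k b = outNeighbors P k c)
    (hca : inNeighbors P k c = outNeighbors P k a) : PtSet3Decomposable P := by
  have hk : 2 * k + 2 < #P := by omega
  have ha := h.isHullVertex_fst ht.1
  have hb := h.isHullVertex_fst ht.2.1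
  have hc := h.isHullVertex_fst ht.2.2
  have hdab : Disjoint (inNeighbors P k a) (inNeighbors P k b) :=
    hab ▸ disjoint_outNeighbors_inNeighbors h hb.1 hk
  have hdbc : Disjoint (inNeighbors P k b) (inNeighbors P k c) :=
    hbc ▸ disjoint_outNeighbors_inNeighbors h hc.1 hk
  have hdca : Disjoint (inNeighbors P k c) (inNeighbors P k a) :=
    hca ▸ disjoint_outNeighbors_inNeighbors h ha.1 hk
  have hcA := ha.card_inNeighbors h (k := k) (by omega)
  have hcB := hb.card_inNeighbors h (k := k) (by omega)
  have hcC := hc.card_inNeighbors h (k := k) (by omega)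
  obtain ⟨u₁, hu₁⟩ := ht.exists_projOrdered h hk (hcut a ha) hdab hdbc hca
  obtain ⟨u₂, hu₂⟩ := ht.rotate.exists_projOrdered h hk (hcut b hb) hdbc hdca hab
  obtain ⟨u₃, hu₃⟩ := ht.rotate.rotate.exists_projOrdered h hk (hcut c hc) hdca hdab hbc
  refine hu₁.ptSet3Decomposable (eq_of_subset_of_card_le ?_ ?_) (card_pos.1 (by omega))
    (hcB.trans hcC.symm) (hcC.trans hcA.symm) hu₂ hu₃ hdbc hdca hdab
  · exact union_subset (union_subset (inNeighbors_subset P k b) (inNeighbors_subset P k c))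
      (inNeighbors_subset P k a)
  · rw [card_union_of_disjoint (disjoint_union_left.2 ⟨hdab.symm, hdca⟩),
      card_union_of_disjoint hdbc]
    omega

lemma EleK_succ (P : Finset (ℝ × ℝ)) (k : ℕ) : EleK P (k + 1) = EleK P k + Ek P (k + 1) :=
  sum_range_succ _ _

lemma Ek_eq_of_EleK_eq (hE : ∀ j ≤ k, EleK P j = 3 * (j + 2).choose 2) : Ek P k = 3 * (k + 1) := by
  cases k with
  | zero => simpa [EleK] using hE 0 le_rfl
  | succ k =>
    have hsucc := EleK_succ P k
    rw [hE _ le_rfl, hE k k.le_succ, choose_succ_two] at hsucc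
    omega

theorem threeDecomposable_of_minimal_leK_edges_general (hcard : #P = 3 * (k + 1)) (h : GenPos P)
    (h₀ : Ek P 0 = 3) (hk : Ek P k = 3 * (k + 1)) (hle : EleK P k = 3 * (k + 2).choose 2) :
    PtSet3Decomposable P := by
  rw [h.Ek_eq_card_kEdges (by omega)] at h₀ hk
  rw [h.EleK_eq_card_ltEdges (by omega)] at hle
  obtain ⟨a, b, c, ht⟩ := h.exists_isTriangularHull (by omega) h₀
  have hcut v (hv : IsHullVertex P v) : #(cutEdges P k v) = k + 1 :=
    hv.card_cutEdges_eq h (by omega) hle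
  have hneighbors {x y z} (ht : IsTriangularHull P x y z) :
      inNeighbors P k x = outNeighbors P k y :=
    ht.inNeighbors_eq_outNeighbors h (by omega) (ht.disjoint_cutEdges h (by omega) hk hcut)
  exact ht.ptSet3Decomposable h hcard hcut (hneighbors ht) (hneighbors ht.rotate)
    (hneighbors ht.rotate.rotate)

end Main

/-- **Main Theorem.** Let `n` be a positive multiple of `3` and let `P` be
a set of `n` points in general position in the plane such that
`E_{≤k}(P) = 3·C(k+2,2)` for every `0 ≤ k < n/3`. Then `P` is 3-decomposable. -/
theorem threeDecomposable_of_minimal_leK_edges (n : ℕ) (hn : 0 < n) (h3 : 3 ∣ n)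
    (P : Finset (ℝ × ℝ)) (hcard : P.card = n) (hgp : GenPos P)
    (hE : ∀ k : ℕ, k < n / 3 → EleK P k = 3 * Nat.choose (k + 2) 2) :
    PtSet3Decomposable P := by
  obtain ⟨k, rfl⟩ : ∃ k, n = 3 * (k + 1) := ⟨n / 3 - 1, by omega⟩
  have hEle j (hj : j ≤ k) : EleK P j = 3 * (j + 2).choose 2 := hE j (by omega)
  exact threeDecomposable_of_minimal_leK_edges_general hcard hgp
    (Ek_eq_of_EleK_eq fun j hj => hEle j (by omega)) (Ek_eq_of_EleK_eq hEle) (hEle k le_rfl)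
end

section
/- Let n be a positive multiple of 3 and let Π be an n-half-period of an allowable sequence 𝚷 such that N_{≤k}(Π) = 3·binom(k+1,2) for every integer k with 1 ≤ k ≤ n/3. Then 𝚷 contains a 3-decomposable n-half-period. -/
/-- An `n`-half-period: a sequence `π_0, …, π_{n(n-1)/2}` of arrangements of `n`
labeled elements in the positions `1, …, n` (recorded by `pos t x` = the position of
element `x` at time `t`), in which consecutive arrangements differ by a transposition
of the elements in two adjacent positions, and the last arrangement is the reverse of
the first. -/
structure HalfPeriod (n : ℕ) where
  pos : ℕ → Fin n → ℕ
  pos_mem : ∀ t, t ≤ n * (n - 1) / 2 → ∀ x, 1 ≤ pos t x ∧ pos t x ≤ n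
  pos_inj : ∀ t, t ≤ n * (n - 1) / 2 → Function.Injective (pos t)
  step : ∀ t, t < n * (n - 1) / 2 → ∃ x y : Fin n,
    pos t y = pos t x + 1 ∧ pos (t + 1) x = pos t x + 1 ∧ pos (t + 1) y = pos t x ∧
    ∀ z, z ≠ x → z ≠ y → pos (t + 1) z = pos t z
  reverse : ∀ x, pos (n * (n - 1) / 2) x = n + 1 - pos 0 x

namespace HalfPeriod

variable {n : ℕ}

/-- The number of transposition steps of an `n`-half-period. -/
def steps (n : ℕ) : ℕ := n * (n - 1) / 2

/-- Element `x` moves (changes position) at step `t`. -/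
def Moved (hp : HalfPeriod n) (t : ℕ) (x : Fin n) : Prop :=
  hp.pos (t + 1) x ≠ hp.pos t x

/-- Step `t` is the transposition of the (distinct) elements `x` and `y`. -/
def SwapsAt (hp : HalfPeriod n) (t : ℕ) (x y : Fin n) : Prop :=
  x ≠ y ∧ hp.Moved t x ∧ hp.Moved t y

/-- Step `t` is an `i`-transposition: it swaps the elements at positions `i` and `i+1`. -/
def GateAt (hp : HalfPeriod n) (t i : ℕ) : Prop :=
  ∃ x y : Fin n, hp.pos t x = i ∧ hp.pos t y = i + 1 ∧
    hp.pos (t + 1) x = i + 1 ∧ hp.pos (t + 1) y = i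

/-- Step `t` is an `i`-critical transposition: an `i`- or an `(n-i)`-transposition. -/
def Critical (hp : HalfPeriod n) (t i : ℕ) : Prop :=
  hp.GateAt t i ∨ hp.GateAt t (n - i)

/-- Step `t` is a `(≤ k)`-critical transposition. -/
def LeCritical (hp : HalfPeriod n) (t k : ℕ) : Prop :=
  ∃ i, 1 ≤ i ∧ i ≤ k ∧ hp.Critical t i

/-- `N_{≤ k}`: the number of `(≤ k)`-critical transpositions of the half-period. -/
noncomputable def NLe (hp : HalfPeriod n) (k : ℕ) : ℕ :=
  {t : ℕ | t < steps n ∧ hp.LeCritical t k}.ncard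

end HalfPeriod
/-- `hp` is a 3-decomposable `n`-half-period witnessed by the labeling
`A = {a 0, …, a (n/3-1)}`, `B`, `C` (the element with 1-indexed subscript `j` is
`a (j-1)`, etc.): the initial arrangement is
`(a_{n/3}, …, a_1, b_1, …, b_{n/3}, c_1, …, c_{n/3})`, every transposition between `A`
and `B` occurs before every transposition between `C` and `A ∪ B`, and every
transposition between `A` and `C` occurs before every transposition between `B`
and `C`. -/
def IsThreeDecompLabeling {n : ℕ} (hp : HalfPeriod n) (a b c : Fin (n / 3) → Fin n) : Prop :=
  Function.Injective (Sum.elim a (Sum.elim b c)) ∧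
  (∀ i, hp.pos 0 (a i) = n / 3 - (i : ℕ)) ∧
  (∀ i, hp.pos 0 (b i) = n / 3 + (i : ℕ) + 1) ∧
  (∀ i, hp.pos 0 (c i) = 2 * (n / 3) + (i : ℕ) + 1) ∧
  (∀ s t, s < HalfPeriod.steps n → t < HalfPeriod.steps n →
    (∃ i j, hp.SwapsAt s (a i) (b j)) →
    (∃ i x, ((∃ j, x = a j) ∨ (∃ j, x = b j)) ∧ hp.SwapsAt t (c i) x) → s < t) ∧
  (∀ s t, s < HalfPeriod.steps n → t < HalfPeriod.steps n →
    (∃ i j, hp.SwapsAt s (a i) (c j)) →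
    (∃ i j, hp.SwapsAt t (b i) (c j)) → s < t)

/-- An `n`-half-period is 3-decomposable if it admits a 3-decomposition labeling. -/
def HalfPeriod.ThreeDecomposable {n : ℕ} (hp : HalfPeriod n) : Prop :=
  ∃ a b c : Fin (n / 3) → Fin n, IsThreeDecompLabeling hp a b c
/-- An allowable sequence on `n` elements: a doubly infinite sequence of arrangements
of the `n` elements in positions `1, …, n`, consecutive arrangements differing by a
transposition of the elements in two adjacent positions, and the arrangement at time
`t + n(n-1)/2` being the reverse of the one at time `t`. -/
structure AllowableSeq (n : ℕ) where
  pos : ℤ → Fin n → ℕ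
  pos_mem : ∀ t x, 1 ≤ pos t x ∧ pos t x ≤ n
  pos_inj : ∀ t, Function.Injective (pos t)
  step : ∀ t : ℤ, ∃ x y : Fin n,
    pos t y = pos t x + 1 ∧ pos (t + 1) x = pos t x + 1 ∧ pos (t + 1) y = pos t x ∧
    ∀ z, z ≠ x → z ≠ y → pos (t + 1) z = pos t z
  reverse : ∀ (t : ℤ) (x : Fin n), pos (t + ((n * (n - 1) / 2 : ℕ) : ℤ)) x = n + 1 - pos t x

/-- The allowable sequence `S` contains the `n`-half-period `hp`: `hp` consists of
`n(n-1)/2 + 1` consecutive arrangements of `S`. -/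
def AllowableSeq.Contains {n : ℕ} (S : AllowableSeq n) (hp : HalfPeriod n) : Prop :=
  ∃ t₀ : ℤ, ∀ t : ℕ, t ≤ n * (n - 1) / 2 → ∀ x, hp.pos t x = S.pos (t₀ + t) x

/-!
The first positions of the arrangements are taken by the vertices of a convex hull, and an oriented
pair of elements is a `(<k)`-edge if fewer than `k` elements are on its left when it is swapped; by
hypothesis, there are at most `3 * (k + 1).choose 2` of these for every `k ≤ n / 3`. Then the hull
is a triangle, and removing it leaves a set with the same property, two levels lower: the edges at
the hull account for `6 * k - 3` of the `(<k)`-edges, and a `(<k - 2)`-edge of the inner set is a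
`(<k)`-edge of the whole. As the inner set attains its bound as well, these are the only inner
`(<k)`-edges, so every `(<n / 3)`-edge between inner elements has at least two hull vertices on its
left.

While one hull vertex is in first position and the other two are beyond the first `n / 3`
positions, no element can therefore enter or leave the first `n / 3` positions. This freezes the
first block during three intervals of each period and, by reversal, the last block during three
others. Suitable times from these intervals cut a half-period into three pieces, in which the last,
the first and again the last block is fixed; the starting thirds `A`, `B`, `C` are therefore
arranged as `B, A, C` after the first piece, as `B, C, A` after the second and as `C, B, A` in the
end.
-/

open Finset in
theorem le_card_filter_lt_of_injOn {α : Type*} {Y : Finset α} {g : α → ℕ} {k : ℕ}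
    (hinj : Set.InjOn g Y) (hg : ∀ y ∈ Y, g y < #Y) (hk : k ≤ #Y) : k ≤ #{y ∈ Y | g y < k} := by
  have hcompl : #{y ∈ Y | ¬g y < k} ≤ #(Ico k #Y) := by
    refine card_le_card_of_injOn g (fun y hy ↦ ?_) (hinj.mono (filter_subset _ _))
    obtain ⟨hyY, hy⟩ := mem_filter.1 hy
    exact mem_coe.2 (mem_Ico.2 ⟨not_lt.1 hy, hg y hyY⟩)
  rw [Nat.card_Ico] at hcompl
  have := card_filter_add_card_filter_not (s := Y) (g · < k)
  omega

namespace AllowableSeq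

open Finset
open HalfPeriod (steps)

variable {n : ℕ} {S : AllowableSeq n} {x y z : Fin n} {s t : ℤ}

/-- `S.Passes x y t`: the transposition from time `t` to time `t + 1` swaps `x` and `y`, and `x`
is on the left before it. -/
def Passes (S : AllowableSeq n) (x y : Fin n) (t : ℤ) : Prop :=
  S.pos t y = S.pos t x + 1 ∧ S.pos (t + 1) x = S.pos t x + 1 ∧ S.pos (t + 1) y = S.pos t x ∧
    ∀ z, z ≠ x → z ≠ y → S.pos (t + 1) z = S.pos t z

theorem exists_passes (S : AllowableSeq n) (t : ℤ) : ∃ x y, S.Passes x y t := S.step t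

theorem pos_add_steps (S : AllowableSeq n) (t : ℤ) (x : Fin n) :
    S.pos (t + steps n) x + S.pos t x = n + 1 := by
  have := S.reverse t x
  have := S.pos_mem t x
  rw [steps]
  omega

theorem pos_ne (S : AllowableSeq n) (h : x ≠ y) (t : ℤ) : S.pos t x ≠ S.pos t y :=
  (S.pos_inj t).ne h

theorem periodic_pos (S : AllowableSeq n) : Function.Periodic S.pos (2 * steps n : ℤ) := by
  intro t
  ext x
  rw [two_mul, ← add_assoc]
  have := S.pos_add_steps t x
  have := S.pos_add_steps (t + steps n) x
  omega

theorem Passes.ne (h : S.Passes x y t) : x ≠ y := by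
  rintro rfl
  have := h.1
  omega

theorem Passes.unique {x' y' : Fin n} (h : S.Passes x y t) (h' : S.Passes x' y' t) :
    x = x' ∧ y = y' := by
  obtain ⟨hy, hx, -, -⟩ := h
  obtain ⟨hy', -, hx', hz'⟩ := h'
  obtain rfl : x = x' := by
    by_contra hne
    rcases eq_or_ne x y' with rfl | hne'
    · omega
    · have := hz' x hne hne'
      omega
  exact ⟨rfl, S.pos_inj t (by omega)⟩

theorem passes_of_lt_of_lt (h : S.pos t x < S.pos t y) (h' : S.pos (t + 1) y < S.pos (t + 1) x) :
    S.Passes x y t := by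
  obtain ⟨u, v, huv⟩ := S.exists_passes t
  obtain ⟨hv, hu', hv', hz⟩ := id huv
  have hxy : x ≠ y := by rintro rfl; omega
  have := S.pos_ne hxy t
  have := fun h : x ≠ u ↦ S.pos_ne h t
  have := fun h : y ≠ u ↦ S.pos_ne h t
  have := fun h : y ≠ v ↦ S.pos_ne h t
  have := hz x
  have := hz y
  grind

theorem exists_passes_of_lt (hst : s ≤ t) (h : S.pos s x < S.pos s y)
    (h' : S.pos t y < S.pos t x) : ∃ u, s ≤ u ∧ u < t ∧ S.Passes x y u := by
  induction t, hst using Int.leInduction with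
  | base => omega
  | succ t hst ih =>
    have hxy : x ≠ y := by rintro rfl; omega
    rcases lt_or_gt_of_ne (S.pos_ne hxy t) with hlt | hlt
    · exact ⟨t, hst, by omega, passes_of_lt_of_lt hlt h'⟩
    · obtain ⟨u, hsu, hut, hu⟩ := ih hlt
      exact ⟨u, hsu, by omega, hu⟩

theorem exists_passes_half (h : S.pos s x < S.pos s y) :
    ∃ u, s ≤ u ∧ u < s + steps n ∧ S.Passes x y u := by
  have := S.pos_add_steps s x
  have := S.pos_add_steps s y
  exact exists_passes_of_lt (by omega) h (by omega)

/-- The unordered pair of elements transposed between times `t` and `t + 1`. -/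
noncomputable def swappedPair (S : AllowableSeq n) (t : ℤ) : Sym2 (Fin n) :=
  s((S.exists_passes t).choose, (S.exists_passes t).choose_spec.choose)

theorem swappedPair_eq_iff :
    S.swappedPair t = s(x, y) ↔ S.Passes x y t ∨ S.Passes y x t := by
  have hspec := (S.exists_passes t).choose_spec.choose_spec
  rw [swappedPair, Sym2.eq_iff]
  constructor
  · rintro (⟨hx, hy⟩ | ⟨hx, hy⟩)
    · exact .inl (hx ▸ hy ▸ hspec)
    · exact .inr (hx ▸ hy ▸ hspec)
  · exact Or.imp (fun h ↦ hspec.unique h) (fun h ↦ hspec.unique h)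

theorem not_isDiag_swappedPair (S : AllowableSeq n) (t : ℤ) : ¬(S.swappedPair t).IsDiag :=
  (S.exists_passes t).choose_spec.choose_spec.ne

theorem exists_swappedPair_eq (h : x ≠ y) (s : ℤ) :
    ∃ t, s ≤ t ∧ t < s + steps n ∧ S.swappedPair t = s(x, y) := by
  rcases lt_or_gt_of_ne (S.pos_ne h s) with hlt | hlt
  · obtain ⟨t, hst, hts, ht⟩ := exists_passes_half hlt
    exact ⟨t, hst, hts, swappedPair_eq_iff.2 (.inl ht)⟩
  · obtain ⟨t, hst, hts, ht⟩ := exists_passes_half hlt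
    exact ⟨t, hst, hts, swappedPair_eq_iff.2 (.inr ht)⟩

/-- Every pair is swapped during a half-period, which has only as many steps as there are
pairs. -/
theorem injOn_swappedPair (S : AllowableSeq n) (s : ℤ) :
    Set.InjOn S.swappedPair (Set.Ico s (s + steps n)) := by
  rw [← Finset.coe_Ico]
  refine Finset.injOn_of_surjOn_of_card_le (t := {a : Sym2 (Fin n) | ¬a.IsDiag}) _
    (fun t _ ↦ by simpa using S.not_isDiag_swappedPair t) ?_ ?_
  · rintro ⟨x, y⟩ hxy
    obtain ⟨t, hst, hts, ht⟩ :=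
      S.exists_swappedPair_eq (show x ≠ y by simpa using hxy) s
    exact ⟨t, by simpa using ⟨hst, hts⟩, ht⟩
  · rw [← Fintype.card_subtype, Sym2.card_subtype_not_diag, Fintype.card_fin,
      Nat.choose_two_right, Int.card_Ico, add_sub_cancel_left, Int.toNat_natCast, steps]

theorem Passes.lt_after (h : S.Passes x y t) (hts : t < s) (hst : s ≤ t + steps n) :
    S.pos s y < S.pos s x := by
  refine (lt_or_gt_of_ne (S.pos_ne h.ne s)).resolve_left fun hlt ↦ ?_
  have hlt' : S.pos (t + 1) y < S.pos (t + 1) x := by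
    obtain ⟨-, hx, hy, -⟩ := h
    omega
  obtain ⟨u, htu, hus, hu⟩ := exists_passes_of_lt (by omega) hlt' hlt
  have := S.injOn_swappedPair t (by simp; omega) (by simp; omega)
    ((swappedPair_eq_iff.2 (.inl h)).trans (swappedPair_eq_iff.2 (.inr hu)).symm)
  omega

theorem Passes.lt_before (h : S.Passes x y t) (hts : t - steps n < s) (hst : s ≤ t) :
    S.pos s x < S.pos s y := by
  have := h.lt_after (s := s + steps n) (by omega) (by omega)
  have := S.pos_add_steps s x
  have := S.pos_add_steps s y
  omega

theorem Passes.add_steps (h : S.Passes x y t) : S.Passes y x (t + steps n) := by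
  obtain ⟨hy, hx', hy', -⟩ := h
  have := S.pos_add_steps t x
  have := S.pos_add_steps t y
  have := S.pos_add_steps (t + 1) x
  have := S.pos_add_steps (t + 1) y
  refine passes_of_lt_of_lt (by omega) ?_
  rw [add_right_comm]
  omega

theorem exists_passes_of_ne (S : AllowableSeq n) (h : x ≠ y) : ∃ t, S.Passes x y t := by
  rcases lt_or_gt_of_ne (S.pos_ne h 0) with hlt | hlt
  · obtain ⟨t, -, -, ht⟩ := exists_passes_half hlt
    exact ⟨t, ht⟩
  · obtain ⟨t, -, -, ht⟩ := exists_passes_half hlt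
    exact ⟨_, ht.add_steps⟩

theorem steps_pos_of_ne {x y : Fin n} (h : x ≠ y) : 0 < steps n := by
  have hn : 1 < n := Fin.nontrivial_iff_two_le.1 ⟨x, y, h⟩
  rw [steps, ← Nat.choose_two_right]
  exact Nat.choose_pos hn

theorem Passes.pos_eq (h : S.Passes x y s) (h' : S.Passes x y t) : S.pos s = S.pos t := by
  have hN := steps_pos_of_ne h.ne
  have hper : Function.Periodic (fun u ↦ (S.pos u, S.Passes x y u)) (2 * steps n : ℤ) := by
    intro u
    simp only [Passes, add_right_comm u _ 1, S.periodic_pos u, S.periodic_pos (u + 1)]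
  obtain ⟨u, ⟨hsu, hus⟩, hu⟩ := hper.exists_mem_Ico (by omega) t s
  obtain ⟨hpos, hpass⟩ := Prod.ext_iff.1 hu
  have hu : S.Passes x y u := hpass.mp h'
  suffices u = s from (hpos.trans (congrArg S.pos this)).symm
  by_contra hne
  rcases le_or_gt u (s + steps n) with hle | hlt
  · have := h.lt_after (s := u) (by omega) hle
    have := hu.1
    omega
  · have := h.add_steps.lt_after (s := u + 1) (by omega) (by omega)
    have := hu.2.1
    have := hu.2.2.1
    omega

theorem monotoneOn_pos_of_eq_one (h : S.pos t x = 1) :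
    MonotoneOn (S.pos · x) (Set.Icc t (t + steps n)) := by
  refine monotoneOn_of_le_add_one Set.ordConnected_Icc fun s _ hs hs' ↦ ?_
  obtain ⟨hts, -⟩ := hs
  obtain ⟨-, hst⟩ := hs'
  obtain ⟨v, w, hvw⟩ := S.exists_passes s
  obtain ⟨-, hv', -, hz⟩ := id hvw
  rcases eq_or_ne x v with rfl | hxv
  · omega
  rcases eq_or_ne x w with rfl | hxw
  · have := hvw.lt_before (s := t) (by omega) hts
    have := S.pos_mem t v
    omega
  · exact (hz x hxv hxw).ge

theorem antitoneOn_pos_of_eq_one (h : S.pos t x = 1) :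
    AntitoneOn (S.pos · x) (Set.Icc (t - steps n) t) := by
  rintro s ⟨hts, -⟩ u ⟨-, hut⟩ hsu
  have : S.pos (s + steps n) x ≤ S.pos (u + steps n) x :=
    monotoneOn_pos_of_eq_one h ⟨by omega, by omega⟩ ⟨by omega, by omega⟩ (by omega)
  have := S.pos_add_steps s x
  have := S.pos_add_steps u x
  simp only
  omega

/-! ### Left sides and hulls -/

/-- The oriented pair `(x, y)` has `z` on its left: `z` precedes `x` when `x` passes `y`. -/
def IsLeft (S : AllowableSeq n) (x y z : Fin n) : Prop :=
  ∃ t, S.Passes x y t ∧ S.pos t z < S.pos t x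

theorem Passes.isLeft_iff (h : S.Passes x y t) : S.IsLeft x y z ↔ S.pos t z < S.pos t x := by
  refine ⟨?_, fun hz ↦ ⟨t, h, hz⟩⟩
  rintro ⟨u, hu, hz⟩
  rwa [hu.pos_eq h] at hz

theorem IsLeft.ne_fst (h : S.IsLeft x y z) : z ≠ x := by
  rintro rfl
  obtain ⟨t, -, hz⟩ := h
  exact hz.false

theorem IsLeft.ne_snd (h : S.IsLeft x y z) : z ≠ y := by
  rintro rfl
  obtain ⟨t, ht, hz⟩ := h
  have := ht.1
  omega

theorem isLeft_swap_iff (hxy : x ≠ y) (hzx : z ≠ x) (hzy : z ≠ y) :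
    S.IsLeft y x z ↔ ¬S.IsLeft x y z := by
  obtain ⟨t, ht⟩ := S.exists_passes_of_ne hxy
  rw [ht.isLeft_iff, ht.add_steps.isLeft_iff]
  have := S.pos_add_steps t z
  have := S.pos_add_steps t y
  have := S.pos_ne hzx t
  have := S.pos_ne hzy t
  have := ht.1
  omega

variable {X H P : Finset (Fin n)} {p q r y' : Fin n} {j k m : ℕ}

open scoped Classical in
/-- The elements of `X` on the left of the oriented pair `(x, y)`. -/
noncomputable def leftSet (S : AllowableSeq n) (X : Finset (Fin n)) (x y : Fin n) :
    Finset (Fin n) :=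
  {z ∈ X | S.IsLeft x y z}

@[simp]
theorem mem_leftSet : z ∈ S.leftSet X x y ↔ z ∈ X ∧ S.IsLeft x y z := by
  simp [leftSet]

theorem card_leftSet_add_card_leftSet_swap (X : Finset (Fin n)) (hxy : x ≠ y) :
    #(S.leftSet X x y) + #(S.leftSet X y x) = #(X \ {x, y}) := by
  have hswap := fun z ↦ isLeft_swap_iff (S := S) (z := z) hxy
  have hfst := fun z (h : S.IsLeft x y z) ↦ h.ne_fst
  have hsnd := fun z (h : S.IsLeft x y z) ↦ h.ne_snd
  have hfst' := fun z (h : S.IsLeft y x z) ↦ h.ne_fst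
  have hsnd' := fun z (h : S.IsLeft y x z) ↦ h.ne_snd
  rw [← card_union_of_disjoint]
  · congr 1
    ext z
    simp only [mem_union, mem_leftSet, mem_sdiff, mem_insert, mem_singleton]
    grind
  · rw [Finset.disjoint_left]
    simp only [mem_leftSet]
    grind

theorem card_leftSet_add_card_leftSet_swap_add_two (hx : x ∈ X) (hy : y ∈ X) (hxy : x ≠ y) :
    #(S.leftSet X x y) + #(S.leftSet X y x) + 2 = #X := by
  rw [card_leftSet_add_card_leftSet_swap X hxy, ← card_pair hxy]
  exact card_sdiff_add_card_eq_card (by grind)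

theorem card_leftSet_sdiff_add_card_leftSet (h : H ⊆ X) :
    #(S.leftSet (X \ H) x y) + #(S.leftSet H x y) = #(S.leftSet X x y) := by
  classical
  unfold leftSet
  rw [← card_union_of_disjoint (disjoint_filter_filter sdiff_disjoint), ← filter_union,
    sdiff_union_of_subset h]

/-- `p` precedes all other elements of `X` at time `t`. -/
def IsFirst (S : AllowableSeq n) (X : Finset (Fin n)) (p : Fin n) (t : ℤ) : Prop :=
  p ∈ X ∧ ∀ z ∈ X, z ≠ p → S.pos t p < S.pos t z

open scoped Classical in
/-- The elements of `X` that precede all others at some time; for the allowable sequence of a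
point set these are the vertices of the convex hull. -/
noncomputable def hull (S : AllowableSeq n) (X : Finset (Fin n)) : Finset (Fin n) :=
  {p ∈ X | ∃ t, S.IsFirst X p t}

theorem mem_hull : p ∈ S.hull X ↔ ∃ t, S.IsFirst X p t := by
  simp only [hull, mem_filter, and_iff_right_iff_imp]
  exact fun ⟨_, h⟩ ↦ h.1

theorem IsFirst.mem_hull (h : S.IsFirst X p t) : p ∈ S.hull X := AllowableSeq.mem_hull.2 ⟨t, h⟩

theorem hull_subset : S.hull X ⊆ X := fun _ hp ↦ (mem_hull.1 hp).choose_spec.1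

theorem exists_isFirst (S : AllowableSeq n) (hX : X.Nonempty) (t : ℤ) :
    ∃ p, S.IsFirst X p t := by
  obtain ⟨p, hp, hmin⟩ := X.exists_min_image (S.pos t) hX
  exact ⟨p, hp, fun z hz hzp ↦ (hmin z hz).lt_of_ne (S.pos_ne hzp.symm t)⟩

theorem IsFirst.card_leftSet_lt {u u' : ℤ} (hp : S.IsFirst X p s) (hy : y ∈ X)
    (h : S.Passes p y u) (h' : S.Passes p y' u') (hsu : s ≤ u) (huu : u < u')
    (hus : u' < s + steps n) : #(S.leftSet X p y) < #(S.leftSet X p y') := by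
  refine card_lt_card ((ssubset_iff_of_subset fun z hz ↦ ?_).2 ⟨y, ?_, ?_⟩)
  · obtain ⟨hzX, hz⟩ := mem_leftSet.1 hz
    obtain ⟨v, hsv, hvu, hv⟩ :=
      exists_passes_of_lt hsu (hp.2 z hzX hz.ne_fst) (h.isLeft_iff.1 hz)
    exact mem_leftSet.2 ⟨hzX, h'.isLeft_iff.2 (hv.lt_after (by omega) (by omega))⟩
  · exact mem_leftSet.2 ⟨hy, h'.isLeft_iff.2 (h.lt_after huu (by omega))⟩
  · exact fun h ↦ (mem_leftSet.1 h).2.ne_snd rfl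

theorem injOn_card_leftSet (hp : p ∈ S.hull X) :
    Set.InjOn (fun y ↦ #(S.leftSet X p y)) (X.erase p) := by
  obtain ⟨s, hs⟩ := mem_hull.1 hp
  intro y hy y' hy' heq
  obtain ⟨hyp, hyX⟩ := mem_erase.1 hy
  obtain ⟨hyp', hyX'⟩ := mem_erase.1 hy'
  obtain ⟨u, hsu, hus, hu⟩ := exists_passes_half (hs.2 y hyX hyp)
  obtain ⟨u', hsu', hus', hu'⟩ := exists_passes_half (hs.2 y' hyX' hyp')
  rcases lt_trichotomy u u' with hlt | rfl | hlt
  · exact absurd heq (hs.card_leftSet_lt hyX hu hu' hsu hlt hus').ne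
  · exact (hu.unique hu').2
  · exact absurd heq (hs.card_leftSet_lt hyX' hu' hu hsu' hlt hus).ne'

theorem injOn_card_leftSet_swap (hp : p ∈ S.hull X) :
    Set.InjOn (fun y ↦ #(S.leftSet X y p)) (X.erase p) := by
  intro y hy y' hy' heq
  obtain ⟨hyp, hyX⟩ := mem_erase.1 hy
  obtain ⟨hyp', hyX'⟩ := mem_erase.1 hy'
  have := card_leftSet_add_card_leftSet_swap_add_two (S := S) hyX (hull_subset hp) hyp
  have := card_leftSet_add_card_leftSet_swap_add_two (S := S) hyX' (hull_subset hp) hyp'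
  refine injOn_card_leftSet hp hy hy' ?_
  simp only at heq ⊢
  omega

theorem mem_hull_of_leftSet_eq_empty (hx : x ∈ X) (hy : y ∈ X) (hxy : x ≠ y)
    (h : S.leftSet X x y = ∅) : x ∈ S.hull X ∧ y ∈ S.hull X := by
  obtain ⟨t, ht⟩ := S.exists_passes_of_ne hxy
  have hfirst : ∀ z ∈ X, z ≠ x → S.pos t x < S.pos t z := fun z hz hzx ↦ by
    have hz : ¬S.IsLeft x y z := fun hl ↦ by simpa [h] using mem_leftSet.2 ⟨hz, hl⟩
    rw [ht.isLeft_iff] at hz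
    have := S.pos_ne hzx t
    omega
  refine ⟨IsFirst.mem_hull ⟨hx, hfirst⟩, IsFirst.mem_hull (t := t + 1) ⟨hy, fun z hz hzy ↦ ?_⟩⟩
  obtain ⟨-, hx', hy', hz'⟩ := ht
  rcases eq_or_ne z x with rfl | hzx
  · omega
  · rw [hy', hz' z hzx hzy]
    exact hfirst z hz hzx

/-- The first element of `X` at the time of the swap is in the hull. -/
theorem one_le_card_leftSet_hull (hx : x ∈ X \ S.hull X) (hxy : x ≠ y) :
    1 ≤ #(S.leftSet (S.hull X) x y) := by
  obtain ⟨hxX, hxH⟩ := mem_sdiff.1 hx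
  obtain ⟨t, ht⟩ := S.exists_passes_of_ne hxy
  obtain ⟨p, hp⟩ := S.exists_isFirst ⟨x, hxX⟩ t
  refine card_pos.2 ⟨p, mem_leftSet.2 ⟨hp.mem_hull, ht.isLeft_iff.2 (hp.2 x hxX ?_)⟩⟩
  rintro rfl
  exact hxH hp.mem_hull

theorem card_leftSet_hull_lt (hy : y ∈ X \ S.hull X) (hxy : x ≠ y) :
    #(S.leftSet (S.hull X) x y) < #(S.hull X) := by
  have := one_le_card_leftSet_hull hy hxy.symm
  have := card_leftSet_add_card_leftSet_swap (S := S) (S.hull X) hxy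
  have := card_le_card (sdiff_subset (s := S.hull X) (t := {x, y}))
  omega

/-! ### Counting `(<k)`-edges -/

/-- The `(<k)`-edges of `X`: the oriented pairs of elements of `X` with fewer than `k` elements of
`X` on their left. -/
noncomputable def edgesLT (S : AllowableSeq n) (X : Finset (Fin n)) (k : ℕ) :
    Finset (Fin n × Fin n) :=
  {e ∈ X.offDiag | #(S.leftSet X e.1 e.2) < k}

theorem mem_edgesLT :
    (x, y) ∈ S.edgesLT X k ↔ x ∈ X ∧ y ∈ X ∧ x ≠ y ∧ #(S.leftSet X x y) < k := by
  simp [edgesLT, and_assoc]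

@[simp]
theorem edgesLT_zero (S : AllowableSeq n) (X : Finset (Fin n)) : S.edgesLT X 0 = ∅ := by
  simp [edgesLT]

theorem le_card_edgesLT_filter_fst (hp : p ∈ S.hull X) (hk : k < #X) :
    k ≤ #{e ∈ S.edgesLT X k | e.1 = p} := by
  have hpX := hull_subset hp
  have hcard := card_erase_add_one hpX
  refine (le_card_filter_lt_of_injOn (injOn_card_leftSet hp) (fun y hy ↦ ?_) (by omega)).trans
    (card_le_card_of_injOn (Prod.mk p) (fun y hy ↦ ?_) (Prod.mk_right_injective p).injOn)
  · have := card_leftSet_add_card_leftSet_swap_add_two (S := S) hpX (mem_of_mem_erase hy)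
      (ne_of_mem_erase hy).symm
    omega
  · obtain ⟨hy, hlt⟩ := mem_filter.1 hy
    exact mem_filter.2
      ⟨mem_edgesLT.2 ⟨hpX, mem_of_mem_erase hy, (ne_of_mem_erase hy).symm, hlt⟩, rfl⟩

theorem le_card_edgesLT_filter_snd (hp : p ∈ S.hull X) (hk : k < #X) :
    k ≤ #{e ∈ S.edgesLT X k | e.2 = p} := by
  have hpX := hull_subset hp
  have hcard := card_erase_add_one hpX
  refine (le_card_filter_lt_of_injOn (injOn_card_leftSet_swap hp) (fun y hy ↦ ?_)
    (by omega)).trans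
    (card_le_card_of_injOn (·, p) (fun y hy ↦ ?_) (Prod.mk_left_injective p).injOn)
  · have := card_leftSet_add_card_leftSet_swap_add_two (S := S) hpX (mem_of_mem_erase hy)
      (ne_of_mem_erase hy).symm
    omega
  · obtain ⟨hy, hlt⟩ := mem_filter.1 hy
    exact mem_filter.2 ⟨mem_edgesLT.2 ⟨mem_of_mem_erase hy, hpX, ne_of_mem_erase hy, hlt⟩, rfl⟩

/-- Each element of `P` has at least `k` outgoing and `k` incoming `(<k)`-edges. -/
theorem two_mul_card_add_card_edgesLT_le (hP : P ⊆ S.hull X) (hk : k < #X) :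
    2 * (k * #P) + #{e ∈ S.edgesLT X k | e.1 ∉ P ∧ e.2 ∉ P} ≤
      #(S.edgesLT X k) + #{e ∈ S.edgesLT X k | e.1 ∈ P ∧ e.2 ∈ P} := by
  have hout : k * #P ≤ #{e ∈ S.edgesLT X k | e.1 ∈ P} :=
    mul_card_image_le_card_of_maps_to (f := Prod.fst) (fun e he ↦ (mem_filter.1 he).2) k
      fun p hp ↦ (le_card_edgesLT_filter_fst (hP hp) hk).trans (card_le_card fun e ↦ by
        simp only [mem_filter]
        grind)
  have hin : k * #P ≤ #{e ∈ S.edgesLT X k | e.2 ∈ P} :=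
    mul_card_image_le_card_of_maps_to (f := Prod.snd) (fun e he ↦ (mem_filter.1 he).2) k
      fun p hp ↦ (le_card_edgesLT_filter_snd (hP hp) hk).trans (card_le_card fun e ↦ by
        simp only [mem_filter]
        grind)
  have hunion := card_union_add_card_inter {e ∈ S.edgesLT X k | e.1 ∈ P}
    {e ∈ S.edgesLT X k | e.2 ∈ P}
  have hcompl := card_filter_add_card_filter_not (s := S.edgesLT X k)
    (fun e ↦ e.1 ∈ P ∨ e.2 ∈ P)
  simp only [← filter_or, ← filter_and, not_or] at hunion hcompl
  omega

/-- At most one of the two orientations of a pair is a `(<k)`-edge. -/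
theorem two_mul_card_edgesLT_filter_le (P : Finset (Fin n)) (hk : 2 * k < #X) :
    2 * #{e ∈ S.edgesLT X k | e.1 ∈ P ∧ e.2 ∈ P} ≤ #P.offDiag := by
  set E := {e ∈ S.edgesLT X k | e.1 ∈ P ∧ e.2 ∈ P}
  have hmem : ∀ x y, (x, y) ∈ E →
      (x ∈ X ∧ y ∈ X ∧ x ≠ y ∧ #(S.leftSet X x y) < k) ∧ x ∈ P ∧ y ∈ P := fun x y h ↦ by
    simpa [E, mem_edgesLT] using h
  have hdisj : Disjoint E (E.image Prod.swap) := by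
    refine Finset.disjoint_left.2 fun ⟨x, y⟩ hxy hyx ↦ ?_
    obtain ⟨⟨hx, hy, hne, hlt⟩, -⟩ := hmem x y hxy
    obtain ⟨⟨-, -, -, hlt'⟩, -⟩ := hmem y x (by simpa using hyx)
    have := card_leftSet_add_card_leftSet_swap_add_two (S := S) hx hy hne
    omega
  calc 2 * #E = #(E ∪ E.image Prod.swap) := by
        rw [card_union_of_disjoint hdisj, card_image_of_injective _ Prod.swap_injective, two_mul]
    _ ≤ #P.offDiag := card_le_card fun ⟨x, y⟩ hxy ↦ by
        have := hmem x y
        have := hmem y x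
        simp only [mem_union, mem_image, Prod.exists, Prod.swap_prod_mk, Prod.mk.injEq,
          mem_offDiag] at hxy ⊢
        grind

theorem card_hull_le_card_edgesLT_one (hX : 2 ≤ #X) : #(S.hull X) ≤ #(S.edgesLT X 1) := by
  have hmaps : ∀ e ∈ S.edgesLT X 1, e.1 ∈ S.hull X := by
    rintro ⟨x, y⟩ he
    obtain ⟨hx, hy, hxy, hlt⟩ := mem_edgesLT.1 he
    exact (mem_hull_of_leftSet_eq_empty hx hy hxy (card_eq_zero.1 (Nat.lt_one_iff.1 hlt))).1
  simpa using mul_card_image_le_card_of_maps_to hmaps 1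
    fun p hp ↦ le_card_edgesLT_filter_fst hp hX

theorem exists_leftSet_eq_empty (hp : p ∈ S.hull X) (hX : 2 ≤ #X) :
    ∃ q ∈ S.hull X, p ≠ q ∧ S.leftSet X p q = ∅ := by
  obtain ⟨⟨x, q⟩, he⟩ := card_pos.1 (le_card_edgesLT_filter_fst hp hX)
  obtain ⟨hpq, rfl⟩ := mem_filter.1 he
  obtain ⟨hpX, hqX, hne, hlt⟩ := mem_edgesLT.1 hpq
  have hempty := card_eq_zero.1 (Nat.lt_one_iff.1 hlt)
  exact ⟨q, (mem_hull_of_leftSet_eq_empty hpX hqX hne hempty).2, hne, hempty⟩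

theorem leftSet_swap_ne_empty (hX : 3 ≤ #X) (hx : x ∈ X) (hy : y ∈ X) (hxy : x ≠ y)
    (h : S.leftSet X x y = ∅) : S.leftSet X y x ≠ ∅ := by
  intro h'
  have := card_leftSet_add_card_leftSet_swap_add_two (S := S) hx hy hxy
  simp only [h, h', card_empty] at this
  omega

theorem exists_hull_chain (S : AllowableSeq n) (hX : 3 ≤ #X) :
    ∃ p ∈ S.hull X, ∃ q ∈ S.hull X, ∃ r ∈ S.hull X, p ≠ q ∧ q ≠ r ∧ r ≠ p ∧
      S.leftSet X p q = ∅ ∧ S.leftSet X q r = ∅ := by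
  obtain ⟨p, hp⟩ := S.exists_isFirst (card_pos.1 (by omega : 0 < #X)) 0
  obtain ⟨q, hq, hpq, hpq₀⟩ := exists_leftSet_eq_empty hp.mem_hull (by omega)
  obtain ⟨r, hr, hqr, hqr₀⟩ := exists_leftSet_eq_empty hq (by omega)
  refine ⟨p, hp.mem_hull, q, hq, r, hr, hpq, hqr, ?_, hpq₀, hqr₀⟩
  rintro rfl
  exact leftSet_swap_ne_empty hX hp.1 (hull_subset hq) hpq hpq₀ hqr₀

theorem three_le_card_hull (hX : 3 ≤ #X) : 3 ≤ #(S.hull X) := by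
  obtain ⟨p, hp, q, hq, r, hr, hpq, hqr, hrp, -, -⟩ := S.exists_hull_chain hX
  exact two_lt_card.2 ⟨p, hp, q, hq, r, hr, hpq, hrp.symm, hqr⟩

theorem exists_hull_cycle (hX : 3 ≤ #X) (hH : #(S.hull X) = 3) :
    ∃ p q r, S.hull X = {p, q, r} ∧ p ≠ q ∧ q ≠ r ∧ r ≠ p ∧
      S.leftSet X p q = ∅ ∧ S.leftSet X q r = ∅ ∧ S.leftSet X r p = ∅ := by
  obtain ⟨p, hp, q, hq, r, hr, hpq, hqr, hrp, hpq₀, hqr₀⟩ := S.exists_hull_chain hX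
  have heq : S.hull X = {p, q, r} := by
    refine (eq_of_subset_of_card_le (by grind) ?_).symm
    rw [hH, card_eq_three.2 ⟨p, q, r, hpq, hrp.symm, hqr, rfl⟩]
  obtain ⟨w, hw, hrw, hrw₀⟩ := exists_leftSet_eq_empty hr (by omega)
  have hwq : w ≠ q := by
    rintro rfl
    exact leftSet_swap_ne_empty hX (hull_subset hq) (hull_subset hr) hqr hqr₀ hrw₀
  obtain rfl : w = p := by grind
  exact ⟨w, q, r, heq, hpq, hqr, hrp, hpq₀, hqr₀, hrw₀⟩

theorem three_mul_choose_succ_add_three (j : ℕ) :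
    3 * (j + 2 + 1).choose 2 + 3 = 3 * (j + 1).choose 2 + 6 * (j + 2) := by
  simp only [Nat.choose_succ_succ' _ 1, Nat.choose_one_right]
  omega

theorem six_mul_add_card_le (hH : #(S.hull X) = 3) (hk : 2 * k < #X) :
    6 * k + #{e ∈ S.edgesLT X k | e.1 ∉ S.hull X ∧ e.2 ∉ S.hull X} ≤ #(S.edgesLT X k) + 3 := by
  have hle := two_mul_card_add_card_edgesLT_le (S := S) (X := X) subset_rfl (k := k) (by omega)
  have hinner := two_mul_card_edgesLT_filter_le (S := S) (S.hull X) hk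
  rw [offDiag_card] at hinner
  rw [hH] at hle hinner
  omega

theorem edgesLT_sdiff_hull_subset (hH : #(S.hull X) = 3) :
    S.edgesLT (X \ S.hull X) j ⊆
      {e ∈ S.edgesLT X (j + 2) | e.1 ∉ S.hull X ∧ e.2 ∉ S.hull X} := by
  rintro ⟨x, y⟩ he
  obtain ⟨hx, hy, hxy, hlt⟩ := mem_edgesLT.1 he
  have := card_leftSet_hull_lt hy hxy
  have := card_leftSet_sdiff_add_card_leftSet (S := S) (x := x) (y := y)
    (hull_subset (S := S) (X := X))
  obtain ⟨hxX, hxH⟩ := mem_sdiff.1 hx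
  obtain ⟨hyX, hyH⟩ := mem_sdiff.1 hy
  exact mem_filter.2 ⟨mem_edgesLT.2 ⟨hxX, hyX, hxy, by omega⟩, hxH, hyH⟩

/-- For `j ≤ m`, the number of `(<j)`-edges of `X` is at most `3 * (j + 1).choose 2`, which is the
least possible number when `3 * j ≤ #X`. -/
def IsTight (S : AllowableSeq n) (X : Finset (Fin n)) (m : ℕ) : Prop :=
  ∀ j ≤ m, #(S.edgesLT X j) ≤ 3 * (j + 1).choose 2

theorem IsTight.mono (h : S.IsTight X m) (hjm : j ≤ m) : S.IsTight X j :=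
  fun i hi ↦ h i (hi.trans hjm)

theorem IsTight.card_hull_eq_three (h : S.IsTight X m) (hm : 1 ≤ m) (hX : 3 ≤ #X) :
    #(S.hull X) = 3 := by
  refine le_antisymm ?_ (three_le_card_hull hX)
  simpa using (card_hull_le_card_edgesLT_one (by omega)).trans (h 1 hm)

theorem IsTight.sdiff_hull (h : S.IsTight X (m + 2)) (hX : 2 * (m + 2) < #X) :
    S.IsTight (X \ S.hull X) m := by
  intro j hj
  have hH := h.card_hull_eq_three (by omega) (by omega)
  have := card_le_card (edgesLT_sdiff_hull_subset (j := j) hH)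
  have := six_mul_add_card_le (k := j + 2) hH (by omega)
  have := h (j + 2) (by omega)
  have := three_mul_choose_succ_add_three j
  omega

theorem IsTight.le_card_edgesLT (h : S.IsTight X m) (hX : 3 * m ≤ #X) :
    3 * (m + 1).choose 2 ≤ #(S.edgesLT X m) := by
  induction m using Nat.twoStepInduction generalizing X with
  | zero => simp
  | one =>
    simpa using (three_le_card_hull hX).trans (card_hull_le_card_edgesLT_one (by omega))
  | more j ih _ =>
    have hH := h.card_hull_eq_three (by omega) (by omega)
    have hcard := card_sdiff_of_subset (hull_subset (S := S) (X := X))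
    have := ih (h.sdiff_hull (by omega)) (by omega)
    have := card_le_card (edgesLT_sdiff_hull_subset (j := j) hH)
    have := six_mul_add_card_le (k := j + 2) hH (by omega)
    have := three_mul_choose_succ_add_three j
    omega

/-- Otherwise `(x, y)` would be a `(<j + 2)`-edge of `X` that is not a `(<j)`-edge of
`X \ S.hull X`, for `j` the number of elements of `X \ S.hull X` on its left, and the bound on the
number of `(<j + 2)`-edges of `X` would not be attained. -/
theorem IsTight.two_le_card_leftSet_hull (h : S.IsTight X m) (hX : 3 * m ≤ #X)
    (hx : x ∈ X \ S.hull X) (hy : y ∈ X \ S.hull X) (hxy : x ≠ y)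
    (hlt : #(S.leftSet X x y) < m) : 2 ≤ #(S.leftSet (S.hull X) x y) := by
  by_contra! hlt_two
  have hone := one_le_card_leftSet_hull hx hxy
  have hadd := card_leftSet_sdiff_add_card_leftSet (S := S) (x := x) (y := y)
    (hull_subset (S := S) (X := X))
  set j := #(S.leftSet (X \ S.hull X) x y) with hj
  have hH := h.card_hull_eq_three (by omega) (by omega)
  have hcard := card_sdiff_of_subset (hull_subset (S := S) (X := X))
  have hle := ((h.mono (by omega : j + 2 ≤ m)).sdiff_hull (by omega)).le_card_edgesLT (by omega)
  have hssub : S.edgesLT (X \ S.hull X) j ⊂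
      {e ∈ S.edgesLT X (j + 2) | e.1 ∉ S.hull X ∧ e.2 ∉ S.hull X} := by
    refine (ssubset_iff_of_subset (edgesLT_sdiff_hull_subset hH)).2 ⟨(x, y), ?_, fun he ↦ ?_⟩
    · exact mem_filter.2 ⟨mem_edgesLT.2 ⟨(mem_sdiff.1 hx).1, (mem_sdiff.1 hy).1, hxy, by omega⟩,
        (mem_sdiff.1 hx).2, (mem_sdiff.1 hy).2⟩
    · exact (mem_edgesLT.1 he).2.2.2.ne hj.symm
  have := card_lt_card hssub
  have := six_mul_add_card_le (k := j + 2) hH (by omega)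
  have := h (j + 2) (by omega)
  have := three_mul_choose_succ_add_three j
  omega

/-! ### Edges and critical transpositions -/

theorem card_filter_pos_mem (S : AllowableSeq n) (t : ℤ) {I : Finset ℕ} (hI : I ⊆ Icc 1 n) :
    #{z | S.pos t z ∈ I} = #I := by
  have himage : univ.image (S.pos t) = Icc 1 n := by
    refine eq_of_subset_of_card_le (fun i hi ↦ ?_) ?_
    · obtain ⟨z, -, rfl⟩ := mem_image.1 hi
      exact mem_Icc.2 (S.pos_mem t z)
    · simp [card_image_of_injective _ (S.pos_inj t)]
  rw [← card_image_of_injective _ (S.pos_inj t), ← filter_image (p := (· ∈ I)), himage,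
    filter_mem_eq_inter, inter_eq_right.2 hI]

theorem Passes.card_leftSet_univ (h : S.Passes x y t) :
    #(S.leftSet univ x y) + 1 = S.pos t x := by
  have hpos := S.pos_mem t x
  have hcard := S.card_filter_pos_mem t (I := Ico 1 (S.pos t x)) fun i hi ↦ by
    simp only [mem_Ico, mem_Icc] at hi ⊢
    omega
  have heq : S.leftSet univ x y = univ.filter (S.pos t · ∈ Ico 1 (S.pos t x)) := by
    ext z
    have := S.pos_mem t z
    simp only [mem_leftSet, h.isLeft_iff, mem_filter, mem_univ, true_and, mem_Ico]
    omega
  rw [heq, hcard, Nat.card_Ico]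
  omega

theorem leCritical_of_mem_edgesLT {hp : HalfPeriod n} {t₀ : ℤ} {u : ℕ} (hu : u < steps n)
    (hpos : ∀ t : ℕ, t ≤ steps n → ∀ x, hp.pos t x = S.pos (t₀ + t) x)
    (he : (x, y) ∈ S.edgesLT univ k) (hpass : S.swappedPair (t₀ + u) = s(x, y)) :
    hp.LeCritical u k := by
  obtain ⟨-, -, hxy, hlt⟩ := mem_edgesLT.1 he
  have hpos₀ := hpos u hu.le
  have hpos₁ := hpos (u + 1) hu
  push_cast at hpos₁
  rw [← add_assoc] at hpos₁
  refine ⟨#(S.leftSet univ x y) + 1, by omega, hlt, ?_⟩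
  rcases swappedPair_eq_iff.1 hpass with h | h
  · have := h.card_leftSet_univ
    obtain ⟨hy, hx', hy', -⟩ := h
    refine .inl ⟨x, y, ?_⟩
    simp only [hpos₀, hpos₁]
    omega
  · have := h.card_leftSet_univ
    have := card_leftSet_add_card_leftSet_swap_add_two (S := S) (mem_univ x) (mem_univ y) hxy
    rw [card_fin] at this
    obtain ⟨hy, hx', hy', -⟩ := h
    refine .inr ⟨y, x, ?_⟩
    simp only [hpos₀, hpos₁]
    omega

theorem card_edgesLT_univ_le_NLe {hp : HalfPeriod n} (hmem : S.Contains hp) (hk : 2 * k < n) :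
    #(S.edgesLT univ k) ≤ hp.NLe k := by
  classical
  obtain ⟨t₀, hpos⟩ := hmem
  have hfin : {u | u < steps n ∧ hp.LeCritical u k}.Finite :=
    (Set.finite_Iio (steps n)).subset fun u hu ↦ hu.1
  rw [HalfPeriod.NLe, Set.ncard_eq_toFinset_card _ hfin]
  refine card_le_card_of_forall_subsingleton
    (fun (e : Fin n × Fin n) (u : ℕ) ↦ S.swappedPair (t₀ + u) = s(e.1, e.2)) ?_ ?_
  · rintro ⟨x, y⟩ he
    obtain ⟨t, ht₀, htN, ht⟩ := S.exists_swappedPair_eq (mem_edgesLT.1 he).2.2.1 t₀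
    obtain ⟨u, rfl⟩ := Int.le.dest ht₀
    have hu : u < steps n := by omega
    exact ⟨u, hfin.mem_toFinset.2 ⟨hu, leCritical_of_mem_edgesLT hu hpos he ht⟩, ht⟩
  · rintro u - ⟨x, y⟩ ⟨he, hxy⟩ ⟨x', y'⟩ ⟨he', hxy'⟩
    rcases Sym2.eq_iff.1 (hxy.symm.trans hxy') with ⟨rfl, rfl⟩ | ⟨rfl, rfl⟩
    · rfl
    · obtain ⟨-, -, hne, hlt⟩ := mem_edgesLT.1 he
      obtain ⟨-, -, -, hlt'⟩ := mem_edgesLT.1 he'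
      have := card_leftSet_add_card_leftSet_swap_add_two (S := S) (mem_univ x) (mem_univ y) hne
      rw [card_fin] at this
      simp only at hlt'
      omega

theorem isTight_univ {hp : HalfPeriod n} (hmem : S.Contains hp) (hm : 2 * m < n)
    (hN : ∀ k, 1 ≤ k → k ≤ m → hp.NLe k = 3 * (k + 1).choose 2) : S.IsTight univ m := by
  intro k hkm
  rcases Nat.eq_zero_or_pos k with rfl | hk
  · simp
  · exact (card_edgesLT_univ_le_NLe hmem (by omega)).trans_eq (hN k hk hkm)

/-! ### Times at which a block is fixed -/

theorem pos_le_pos_add_one_add_one (S : AllowableSeq n) (t : ℤ) (x : Fin n) :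
    S.pos t x ≤ S.pos (t + 1) x + 1 := by
  obtain ⟨u, v, huv⟩ := S.exists_passes t
  obtain ⟨hv, hu', hv', hz⟩ := id huv
  rcases eq_or_ne x u with rfl | hxu
  · omega
  rcases eq_or_ne x v with rfl | hxv
  · omega
  · exact (hz x hxu hxv).symm ▸ Nat.le_succ _

theorem exists_pos_eq_of_lt_of_le (hst : s ≤ t) (h : k < S.pos s x) (h' : S.pos t x ≤ k) :
    ∃ u, s < u ∧ u ≤ t ∧ S.pos u x = k := by
  induction t, hst using Int.leInduction with
  | base => omega
  | succ t hst ih =>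
    rcases le_or_gt (S.pos t x) k with hle | hlt
    · obtain ⟨u, hsu, hut, hu⟩ := ih hle
      exact ⟨u, hsu, by omega, hu⟩
    · have := S.pos_le_pos_add_one_add_one t x
      exact ⟨t + 1, by omega, le_rfl, by omega⟩

/-- A swap across the boundary of the first block would be a `(<m)`-edge with two elements of the
hull on its left, but only `w` can be there. -/
theorem IsTight.pos_le_iff_pos_add_one_le (h : S.IsTight univ m) (hn : 3 * m ≤ n) {w : Fin n}
    (hw : S.pos t w = 1) (hw' : S.pos (t + 1) w = 1)
    (hH : ∀ z ∈ S.hull univ, z ≠ w → m < S.pos t z)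
    (hH' : ∀ z ∈ S.hull univ, z ≠ w → m < S.pos (t + 1) z) (z : Fin n) :
    S.pos t z ≤ m ↔ S.pos (t + 1) z ≤ m := by
  obtain ⟨x, y, hxy⟩ := S.exists_passes t
  obtain ⟨hy, hx', hy', hz⟩ := id hxy
  have hxw : x ≠ w := by rintro rfl; omega
  have hyw : y ≠ w := by
    rintro rfl
    have := S.pos_mem t x
    omega
  have hne : S.pos t x ≠ m := by
    intro hx
    have hxH : x ∈ univ \ S.hull univ :=
      mem_sdiff.2 ⟨mem_univ x, fun hmem ↦ (hH x hmem hxw).ne' hx⟩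
    have hyH : y ∈ univ \ S.hull univ :=
      mem_sdiff.2 ⟨mem_univ y, fun hmem ↦ (hH' y hmem hyw).ne' (hy'.trans hx)⟩
    have hcard := hxy.card_leftSet_univ
    have htwo := h.two_le_card_leftSet_hull (by simpa using hn) hxH hyH hxy.ne (by omega)
    have hsub : S.leftSet (S.hull univ) x y ⊆ {w} := fun v hv ↦ by
      obtain ⟨hvH, hv⟩ := mem_leftSet.1 hv
      rw [hxy.isLeft_iff] at hv
      by_contra hvw
      have := hH v hvH (by simpa using hvw)
      omega
    have := card_le_card hsub
    rw [card_singleton] at this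
    omega
  rcases eq_or_ne z x with rfl | hzx
  · omega
  rcases eq_or_ne z y with rfl | hzy
  · omega
  · rw [hz z hzx hzy]

theorem IsTight.pos_le_iff_pos_le (h : S.IsTight univ m) (hn : 3 * m ≤ n) {w : Fin n}
    (hst : s ≤ t) (hw : ∀ u, s ≤ u → u ≤ t → S.pos u w = 1)
    (hH : ∀ u, s ≤ u → u ≤ t → ∀ z ∈ S.hull univ, z ≠ w → m < S.pos u z) (z : Fin n) :
    S.pos s z ≤ m ↔ S.pos t z ≤ m := by
  induction t, hst using Int.leInduction with
  | base => rfl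
  | succ t hst ih =>
    rw [ih (fun u hsu hut ↦ hw u hsu (by omega)) (fun u hsu hut ↦ hH u hsu (by omega))]
    exact h.pos_le_iff_pos_add_one_le hn (hw t hst (by omega)) (hw (t + 1) (by omega) le_rfl)
      (hH t hst (by omega)) (hH (t + 1) (by omega) le_rfl) z

/-- The hull of all elements is the triangle `p, q, r`: its vertices take over the first position
from one another at the times `a`, `b`, `c` of a single period. -/
structure IsHullTriangle (S : AllowableSeq n) (p q r : Fin n) (a b c : ℤ) : Prop where
  hull_eq : S.hull univ = {p, q, r}
  passes_fst : S.Passes p q a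
  passes_snd : S.Passes q r b
  passes_trd : S.Passes r p c
  pos_fst : S.pos a p = 1
  pos_snd : S.pos b q = 1
  pos_trd : S.pos c r = 1
  snd_lt : b < a + steps n
  trd_lt : c < b + steps n
  lt_trd : a + steps n < c

theorem Passes.exists_passes_of_leftSet_eq_empty (h : S.Passes p q s) (hs : S.pos s p = 1)
    (hn : 3 ≤ n) (hqr : q ≠ r) (h₀ : S.leftSet univ q r = ∅) :
    ∃ t, s < t ∧ t < s + steps n ∧ S.Passes q r t ∧ S.pos t q = 1 := by
  obtain ⟨hq, -, hq', -⟩ := h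
  have := S.pos_mem (s + 1) r
  have := S.pos_ne hqr (s + 1)
  obtain ⟨t, hst, hts, ht⟩ := exists_passes_half (S := S) (s := s + 1) (x := q) (y := r) (by omega)
  have ht₁ : S.pos t q = 1 := by simpa [h₀] using ht.card_leftSet_univ.symm
  have hne : t ≠ s + steps n := by
    rintro rfl
    have := S.pos_add_steps s q
    omega
  exact ⟨t, by omega, by omega, ht, ht₁⟩

theorem exists_isHullTriangle (hn : 3 ≤ n) (hH : #(S.hull univ) = 3) :
    ∃ p q r a b c, S.IsHullTriangle p q r a b c := by
  obtain ⟨p, q, r, heq, hpq, hqr, hrp, hpq₀, hqr₀, hrp₀⟩ :=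
    exists_hull_cycle (S := S) (X := univ) (by simpa using hn) hH
  obtain ⟨a, ha⟩ := S.exists_passes_of_ne hpq
  have ha₁ : S.pos a p = 1 := by simpa [hpq₀] using ha.card_leftSet_univ.symm
  obtain ⟨b, hab, hba, hb, hb₁⟩ := ha.exists_passes_of_leftSet_eq_empty ha₁ hn hqr hqr₀
  obtain ⟨c, hbc, hcb, hc, hc₁⟩ := hb.exists_passes_of_leftSet_eq_empty hb₁ hn hrp hrp₀
  refine ⟨p, q, r, a, b, c, heq, ha, hb, hc, ha₁, hb₁, hc₁, hba, hcb, ?_⟩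
  obtain ⟨-, hap', -, -⟩ := ha
  obtain ⟨hcp, -, hcp', -⟩ := hc
  by_contra! hca
  rcases hca.eq_or_lt with rfl | hlt
  · have := S.pos_add_steps a p
    omega
  · have : S.pos (a + 1) p ≤ S.pos (c + 1) p :=
      monotoneOn_pos_of_eq_one ha₁ ⟨by omega, by omega⟩ ⟨by omega, by omega⟩ (by omega)
    omega

namespace IsHullTriangle

variable {a b c u v : ℤ}

theorem rotate (h : S.IsHullTriangle p q r a b c) :
    S.IsHullTriangle q r p b c (a + 2 * steps n) where
  hull_eq := by
    rw [h.hull_eq]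
    grind
  passes_fst := h.passes_snd
  passes_snd := h.passes_trd
  passes_trd := by
    rw [two_mul, ← add_assoc]
    exact h.passes_fst.add_steps.add_steps
  pos_fst := h.pos_snd
  pos_snd := h.pos_trd
  pos_trd := by rw [S.periodic_pos, h.pos_fst]
  snd_lt := h.trd_lt
  trd_lt := by linarith [h.lt_trd]
  lt_trd := by linarith [h.snd_lt]

theorem exists_pos_fst_eq (h : S.IsHullTriangle p q r a b c) (hm : 1 ≤ m) (hmn : m + 1 < n) :
    ∃ u, a + steps n < u ∧ u ≤ c ∧ S.pos u p = m + 1 := by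
  have := S.pos_add_steps a p
  have := h.pos_fst
  have := h.pos_trd
  have := h.passes_trd.1
  exact exists_pos_eq_of_lt_of_le h.lt_trd.le (by omega) (by omega)

/-- During `[v - steps n, u]`, `r` is in first position, `q` moves to the right and `p` to the
left. -/
theorem pos_sub_steps_le_iff (h : S.IsHullTriangle p q r a b c) (htight : S.IsTight univ m)
    (hm : 1 ≤ m) (hn : 3 * m ≤ n) (hau : a + steps n < u) (huc : u ≤ c) (hu : S.pos u p = m + 1)
    (hbv : b + steps n < v) (hva : v ≤ a + 2 * steps n) (hv : S.pos v q = m + 1) (z : Fin n) :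
    S.pos (v - steps n) z ≤ m ↔ S.pos u z ≤ m := by
  have hcb := h.trd_lt
  refine htight.pos_le_iff_pos_le hn (w := r) (by omega) (fun t hvt htu ↦ ?_)
    (fun t hvt htu z hz hzr ↦ ?_) z
  · have hr : S.pos (b + 1) r = 1 := h.passes_snd.2.2.1.trans h.pos_snd
    have : S.pos t r ≤ S.pos c r :=
      monotoneOn_pos_of_eq_one hr ⟨by omega, by omega⟩ ⟨by omega, by omega⟩ (by omega)
    have := h.pos_trd
    have := S.pos_mem t r
    omega
  · have hz : z = p ∨ z = q := by simpa [h.hull_eq, hzr] using hz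
    rcases hz with rfl | rfl
    · have hp : S.pos (c + 1) z = 1 := h.passes_trd.2.2.1.trans h.pos_trd
      have : S.pos u z ≤ S.pos t z :=
        antitoneOn_pos_of_eq_one hp ⟨by omega, by omega⟩ ⟨by omega, by omega⟩ htu
      omega
    · have : S.pos (v - steps n) z ≤ S.pos t z :=
        monotoneOn_pos_of_eq_one h.pos_snd ⟨by omega, by omega⟩ ⟨by omega, by omega⟩ hvt
      have := S.pos_add_steps (v - steps n) z
      rw [sub_add_cancel] at this
      omega

end IsHullTriangle

theorem lt_pos_iff_pos_add_steps_le (S : AllowableSeq n) (hm : m ≤ n) (t : ℤ) (z : Fin n) :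
    n - m < S.pos t z ↔ S.pos (t + steps n) z ≤ m := by
  have := S.pos_add_steps t z
  omega

/-- The times `t₁ ≤ t₂ ≤ t₃` cut the half-period starting at `t₁` into three pieces, in each of
which the last, the first, and again the last `m` positions are occupied by the same elements at
the beginning and at the end. -/
structure IsCut (S : AllowableSeq n) (m : ℕ) (t₁ t₂ t₃ : ℤ) : Prop where
  le_snd : t₁ ≤ t₂
  snd_le_trd : t₂ ≤ t₃
  trd_le : t₃ ≤ t₁ + steps n
  lt_pos_fst_iff : ∀ z, n - m < S.pos t₁ z ↔ n - m < S.pos t₂ z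
  pos_snd_le_iff : ∀ z, S.pos t₂ z ≤ m ↔ S.pos t₃ z ≤ m
  lt_pos_trd_iff : ∀ z, n - m < S.pos t₃ z ↔ n - m < S.pos (t₁ + steps n) z

theorem IsTight.exists_isCut (h : S.IsTight univ m) (hm : 1 ≤ m) (hn : 3 * m ≤ n) :
    ∃ t₁ t₂ t₃, S.IsCut m t₁ t₂ t₃ := by
  obtain ⟨p, q, r, a, b, c, hT⟩ :=
    exists_isHullTriangle (by omega) (h.card_hull_eq_three hm (by simp; omega))
  obtain ⟨u₁, hau₁, hu₁c, hu₁⟩ := hT.exists_pos_fst_eq hm (by omega)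
  obtain ⟨u₂, hbu₂, hu₂a, hu₂⟩ := hT.rotate.exists_pos_fst_eq hm (by omega)
  obtain ⟨u₃, hcu₃, hu₃b, hu₃⟩ := hT.rotate.rotate.exists_pos_fst_eq hm (by omega)
  have hblock₁ := hT.pos_sub_steps_le_iff h hm hn hau₁ hu₁c hu₁ hbu₂ hu₂a hu₂
  have hblock₂ := hT.rotate.pos_sub_steps_le_iff h hm hn hbu₂ hu₂a hu₂ hcu₃ hu₃b hu₃
  have hblock₃ := hT.rotate.rotate.pos_sub_steps_le_iff h hm hn hcu₃ hu₃b hu₃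
    (v := u₁ + 2 * steps n) (by omega) (by omega) (by rw [S.periodic_pos, hu₁])
  refine ⟨u₁, u₃ - steps n, u₂, by omega, by omega, by omega, fun z ↦ ?_, hblock₂, fun z ↦ ?_⟩
  · rw [S.lt_pos_iff_pos_add_steps_le (by omega), S.lt_pos_iff_pos_add_steps_le (by omega),
      sub_add_cancel, ← hblock₃, two_mul, ← add_assoc, add_sub_cancel_right]
  · rw [S.lt_pos_iff_pos_add_steps_le (by omega), S.lt_pos_iff_pos_add_steps_le (by omega),
      add_assoc u₁, ← two_mul, S.periodic_pos, ← hblock₁, ← S.periodic_pos (u₂ - steps n),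
      two_mul, ← add_assoc, sub_add_cancel]

/-! ### Three-decomposable half-periods -/

/-- The half-period of `S` that starts at time `t₀`. -/
def half (S : AllowableSeq n) (t₀ : ℤ) : HalfPeriod n where
  pos t x := S.pos (t₀ + t) x
  pos_mem t _ x := S.pos_mem (t₀ + t) x
  pos_inj t _ := S.pos_inj (t₀ + t)
  step t _ := by
    push_cast
    rw [← add_assoc]
    exact S.step (t₀ + t)
  reverse x := by
    rw [Nat.cast_zero, add_zero]
    exact S.reverse t₀ x

theorem contains_half (S : AllowableSeq n) (t₀ : ℤ) : S.Contains (S.half t₀) :=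
  ⟨t₀, fun _ _ _ ↦ rfl⟩

theorem swapsAt_comm {hp : HalfPeriod n} {i : ℕ} : hp.SwapsAt i x y ↔ hp.SwapsAt i y x :=
  and_congr ne_comm and_comm

theorem swappedPair_eq_of_swapsAt_half {t₀ : ℤ} {i : ℕ} (h : (S.half t₀).SwapsAt i x y) :
    S.swappedPair (t₀ + i) = s(x, y) := by
  obtain ⟨hxy, hx, hy⟩ := h
  simp only [HalfPeriod.Moved, half, Nat.cast_add, Nat.cast_one, ← add_assoc] at hx hy
  obtain ⟨u, v, huv⟩ := S.exists_passes (t₀ + i)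
  have hmoved : ∀ z, S.pos (t₀ + i + 1) z ≠ S.pos (t₀ + i) z → z = u ∨ z = v := fun z hz ↦ by
    by_contra! hne
    exact hz (huv.2.2.2 z hne.1 hne.2)
  rw [swappedPair_eq_iff.2 (.inl huv), Sym2.eq_iff]
  have := hmoved x hx
  have := hmoved y hy
  grind

theorem add_lt_iff_of_swapsAt_half {t₀ τ : ℤ} {i : ℕ} (h : (S.half t₀).SwapsAt i x y)
    (hi : i < steps n) (hxy : S.pos t₀ x < S.pos t₀ y) (hτ : t₀ ≤ τ) (hτ' : τ ≤ t₀ + steps n) :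
    t₀ + i < τ ↔ S.pos τ y < S.pos τ x := by
  rcases swappedPair_eq_iff.1 (swappedPair_eq_of_swapsAt_half h) with h | h
  · constructor
    · exact fun hlt ↦ h.lt_after hlt (by omega)
    · intro hlt
      by_contra! hle
      exact (h.lt_before (by omega) hle).asymm hlt
  · exact absurd (h.lt_before (s := t₀) (by omega) (by omega)) hxy.asymm

theorem exists_pos_eq (S : AllowableSeq n) (t : ℤ) (hk : 1 ≤ k) (hkn : k ≤ n) :
    ∃ x, S.pos t x = k := by
  have hcard := S.card_filter_pos_mem t (I := {k}) (by simp [hk, hkn])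
  obtain ⟨x, hx⟩ := card_pos.1 (hcard.trans_gt (by simp))
  exact ⟨x, by simpa using hx⟩

theorem exists_labeling (S : AllowableSeq n) (t : ℤ) :
    ∃ a b c : Fin (n / 3) → Fin n, Function.Injective (Sum.elim a (Sum.elim b c)) ∧
      (∀ i, S.pos t (a i) = n / 3 - i) ∧ (∀ i, S.pos t (b i) = n / 3 + i + 1) ∧
      ∀ i, S.pos t (c i) = 2 * (n / 3) + i + 1 := by
  choose a ha using fun i : Fin (n / 3) ↦
    S.exists_pos_eq t (k := n / 3 - i) (by omega) (by omega)
  choose b hb using fun i : Fin (n / 3) ↦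
    S.exists_pos_eq t (k := n / 3 + i + 1) (by omega) (by omega)
  choose c hc using fun i : Fin (n / 3) ↦
    S.exists_pos_eq t (k := 2 * (n / 3) + i + 1) (by omega) (by omega)
  refine ⟨a, b, c, .of_comp (f := S.pos t) ?_, ha, hb, hc⟩
  rintro (i | i | i) (j | j | j) hij <;>
    simp only [Function.comp_apply, Sum.elim_inl, Sum.elim_inr, ha, hb, hc] at hij <;>
    first | omega | (congr; omega)

theorem pos_mem_iff_pos_mem_of_imp {I J : Finset ℕ} (hI : I ⊆ Icc 1 n) (hJ : J ⊆ Icc 1 n)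
    (hcard : #I = #J) (h : ∀ z, S.pos s z ∈ I → S.pos t z ∈ J) (z : Fin n) :
    S.pos s z ∈ I ↔ S.pos t z ∈ J := by
  have heq : univ.filter (S.pos s · ∈ I) = univ.filter (S.pos t · ∈ J) := by
    refine eq_of_subset_of_card_le (monotone_filter_right _ fun z _ ↦ h z) ?_
    rw [S.card_filter_pos_mem s hI, S.card_filter_pos_mem t hJ, hcard]
  simpa using Finset.ext_iff.1 heq z

namespace IsCut

variable {t₁ t₂ t₃ : ℤ}

theorem lt_pos_trd_iff_pos_fst_le (h : S.IsCut m t₁ t₂ t₃) (hmn : m ≤ n) (z : Fin n) :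
    n - m < S.pos t₃ z ↔ S.pos t₁ z ≤ m := by
  have := h.lt_pos_trd_iff z
  have := S.pos_add_steps t₁ z
  omega

theorem pos_snd_le_iff_mid (h : S.IsCut m t₁ t₂ t₃) (hn : n = 3 * m) (z : Fin n) :
    S.pos t₂ z ≤ m ↔ m < S.pos t₁ z ∧ S.pos t₁ z ≤ 2 * m := by
  have hiff := pos_mem_iff_pos_mem_of_imp (S := S) (s := t₂) (t := t₁) (I := Icc 1 m)
    (J := Ioc m (2 * m)) (Icc_subset_Icc_right (by omega)) (fun i hi ↦ by simp at hi ⊢; omega)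
    (by simp; omega) (fun z hz ↦ ?_) z
  · simpa [S.pos_mem] using hiff
  · have := h.lt_pos_fst_iff z
    have := h.pos_snd_le_iff z
    have := h.lt_pos_trd_iff_pos_fst_le (by omega) z
    simp only [mem_Icc, mem_Ioc] at hz ⊢
    omega

/-- With `A`, `B`, `C` the consecutive thirds of the arrangement at `t₁`, the thirds at `t₂` are
`B`, `A`, `C` and those at `t₃` are `B`, `C`, `A`. -/
theorem threeDecomposable_half (h : S.IsCut (n / 3) t₁ t₂ t₃) (h3 : 3 ∣ n) :
    (S.half t₁).ThreeDecomposable := by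
  obtain ⟨a, b, c, hinj, ha, hb, hc⟩ := S.exists_labeling t₁
  have hmid := h.pos_snd_le_iff_mid (by omega)
  have hlast₂ := h.lt_pos_fst_iff
  have hfirst₃ := h.pos_snd_le_iff
  have hlast₃ := h.lt_pos_trd_iff_pos_fst_le (Nat.div_le_self n 3)
  have hA : ∀ i, n / 3 < S.pos t₂ (a i) ∧ S.pos t₂ (a i) ≤ 2 * (n / 3) ∧
      2 * (n / 3) < S.pos t₃ (a i) := by grind
  have hB : ∀ i, S.pos t₂ (b i) ≤ n / 3 ∧ S.pos t₃ (b i) ≤ n / 3 := by grind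
  have hC : ∀ i, 2 * (n / 3) < S.pos t₂ (c i) ∧ n / 3 < S.pos t₃ (c i) ∧
      S.pos t₃ (c i) ≤ 2 * (n / 3) := by grind
  have hle := h.le_snd.trans h.snd_le_trd
  have hle' := h.snd_le_trd.trans h.trd_le
  refine ⟨a, b, c, hinj, by simpa [half] using ha, by simpa [half] using hb,
    by simpa [half] using hc, ?_, ?_⟩
  · rintro u v hu hv ⟨i, j, hij⟩ ⟨l, x, hx, hlx⟩
    have hlt : t₁ + u < t₂ := (add_lt_iff_of_swapsAt_half hij hu (by grind) h.le_snd hle').2 <|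
      by grind
    have hge : ¬t₁ + v < t₂ := by
      rw [add_lt_iff_of_swapsAt_half (swapsAt_comm.1 hlx) hv (by grind) h.le_snd hle']
      grind
    omega
  · rintro u v hu hv ⟨i, j, hij⟩ ⟨l, l', hll'⟩
    have hlt : t₁ + u < t₃ := (add_lt_iff_of_swapsAt_half hij hu (by grind) hle h.trd_le).2 <|
      by grind
    have hge : ¬t₁ + v < t₃ := by
      rw [add_lt_iff_of_swapsAt_half hll' hv (by grind) hle h.trd_le]
      grind
    omega

end IsCut

end AllowableSeq

/-- Let `n` be a positive multiple of `3` and let `Π` be an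
`n`-half-period of an allowable sequence `𝚷` with `N_{≤k}(Π) = 3·C(k+1,2)` for every
`1 ≤ k ≤ n/3`. Then `𝚷` contains a 3-decomposable `n`-half-period. -/
theorem allowable_contains_three_decomposable (n : ℕ) (hn : 0 < n) (h3 : 3 ∣ n)
    (S : AllowableSeq n) (hp : HalfPeriod n) (hmem : S.Contains hp)
    (hN : ∀ k : ℕ, 1 ≤ k → k ≤ n / 3 → hp.NLe k = 3 * Nat.choose (k + 1) 2) :
    ∃ hp' : HalfPeriod n, S.Contains hp' ∧ hp'.ThreeDecomposable := by
  have htight : S.IsTight Finset.univ (n / 3) :=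
    AllowableSeq.isTight_univ hmem (by omega) hN
  obtain ⟨t₁, t₂, t₃, hcut⟩ := htight.exists_isCut (by omega) (by omega)
  exact ⟨S.half t₁, S.contains_half t₁, hcut.threeDecomposable_half h3⟩
end
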